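/- For all integers d ≥ 1 and r ≥ 0, the number of reduced words of w^{(d,r)} equals the number of standard Young tableaux of shifted shape Z(d,r): |Red(w^{(d,r)})| = |SYT(Z(d,r))|. -/

import Mathlib

open scoped BigOperators

namespace BST

/-- `lam` (1-indexed, with `d` parts) is a strict partition: strictly decreasing
positive parts `lam 1 > lam 2 > ⋯ > lam d > 0`. -/
def IsStrictPartition (d : ℕ) (lam : ℕ → ℕ) : Prop :=
  (∀ i : ℕ, 1 ≤ i → i < d → lam (i + 1) < lam i) ∧ 1 ≤ lam d

/-- The size `|λ| = λ_1 + ⋯ + λ_d`. -/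
def sizeP (d : ℕ) (lam : ℕ → ℕ) : ℕ := ∑ i ∈ Finset.Icc 1 d, lam i

/-- The shifted diagram `D(λ) ⊆ ℤ × ℤ`: row `i` (1 ≤ i ≤ d) occupies columns
`i - d, …, λ_i + i - d - 1`. -/
def Diagram (d : ℕ) (lam : ℕ → ℕ) : Set (ℤ × ℤ) :=
  {p : ℤ × ℤ | 1 ≤ p.1 ∧ p.1 ≤ (d : ℤ) ∧ p.1 - (d : ℤ) ≤ p.2 ∧
    p.2 + (d : ℤ) + 1 ≤ (lam p.1.toNat : ℤ) + p.1}

/-- The hook `H(i,c)`. -/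
def Hook (d : ℕ) (lam : ℕ → ℕ) (i c : ℤ) : Set (ℤ × ℤ) :=
  {(i, c)} ∪ {p ∈ Diagram d lam | (p.1 = i ∧ c < p.2) ∨ (p.2 = c ∧ i < p.1)} ∪
    {p ∈ Diagram d lam | c < 0 ∧ p.1 = (d : ℤ) + 1 + c}

/-- The extended hook `H̃(i,c)`. -/
def ExtHook (d : ℕ) (lam : ℕ → ℕ) (i c : ℤ) : Set (ℤ × ℤ) :=
  Hook d lam i c ∪ {p : ℤ × ℤ | c < 0 ∧ p = ((d : ℤ) + 1 + c, c)}

/-- The extended diagram `D(λ) ∪ {(i, i - d - 1) : 1 ≤ i ≤ d}`. -/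
def ExtDiagram (d : ℕ) (lam : ℕ → ℕ) : Set (ℤ × ℤ) :=
  Diagram d lam ∪ {p : ℤ × ℤ | 1 ≤ p.1 ∧ p.1 ≤ (d : ℤ) ∧ p.2 = p.1 - ((d : ℤ) + 1)}

/-- The extended filling `B̃`, with `B̃(i, i - d - 1) = B(i, 0)`. -/
def ExtFilling (d : ℕ) (B : ℤ × ℤ → ℕ) : ℤ × ℤ → ℕ :=
  fun p => if p.2 = p.1 - ((d : ℤ) + 1) then B (p.1, 0) else B p

/-- The rank function `rk(i,c)`. -/
def rk (d : ℕ) (lam : ℕ → ℕ) (i c : ℤ) : ℤ :=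
  if 0 ≤ c then (lam i.toNat : ℤ) - d + i - c
  else (lam i.toNat : ℤ) - d + i + (lam ((d : ℤ) + 1 + c).toNat : ℤ) + c + 1

/-- A bijective filling of `D(λ)` with `1, …, |λ|` (normalized to be `0` off the diagram). -/
def IsFilling (d : ℕ) (lam : ℕ → ℕ) (B : ℤ × ℤ → ℕ) : Prop :=
  Set.BijOn B (Diagram d lam) (Set.Icc 1 (sizeP d lam)) ∧
    ∀ p : ℤ × ℤ, p ∉ Diagram d lam → B p = 0

/-- A balanced shifted tableau: a bijective filling such that at each box `(i,c)`,
`B(i,c)` is the `rk(i,c)`-th largest entry of the multiset of values of `B̃` on the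
extended hook, i.e. exactly `rk(i,c) - 1` boxes of the extended hook carry a value
strictly larger than `B(i,c)`. -/
def IsBalanced (d : ℕ) (lam : ℕ → ℕ) (B : ℤ × ℤ → ℕ) : Prop :=
  IsFilling d lam B ∧ ∀ p ∈ Diagram d lam,
    ({q ∈ ExtHook d lam p.1 p.2 | B p < ExtFilling d B q}.ncard : ℤ) =
      rk d lam p.1 p.2 - 1

/-- A standard Young tableau of shifted shape `λ`. -/
def IsSYT (d : ℕ) (lam : ℕ → ℕ) (B : ℤ × ℤ → ℕ) : Prop :=
  IsFilling d lam B ∧ ∀ p ∈ Diagram d lam, ∀ q ∈ Diagram d lam,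
    ((p.1 = q.1 ∧ p.2 < q.2) → B p < B q) ∧ ((p.2 = q.2 ∧ p.1 < q.1) → B p < B q)

/-- The simple reflections of `W(B_n)`, acting on `ℤ`: `s 0` swaps `1 ↔ -1`,
and `s a` (for `a ≥ 1`) swaps `a ↔ a+1` and `-a ↔ -(a+1)`. -/
def sB (a : ℕ) : Equiv.Perm ℤ :=
  if a = 0 then Equiv.swap 1 (-1)
  else Equiv.swap (a : ℤ) ((a : ℤ) + 1) * Equiv.swap (-(a : ℤ)) (-(a : ℤ) - 1)

/-- The product `s_{a_1} s_{a_2} ⋯ s_{a_m}` of a word. -/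
def wordProd (L : List ℕ) : Equiv.Perm ℤ := (L.map sB).prod

/-- A signed permutation in `W(B_n)`: odd, and the identity beyond `n`. -/
def IsSignedPerm (n : ℕ) (w : Equiv.Perm ℤ) : Prop :=
  (∀ i : ℤ, w (-i) = -(w i)) ∧ ∀ i : ℤ, (n : ℤ) < |i| → w i = i

/-- The Coxeter length of `w` in `W(B_n)`. -/
noncomputable def lengthB (n : ℕ) (w : Equiv.Perm ℤ) : ℕ :=
  sInf {m : ℕ | ∃ L : List ℕ, (∀ a ∈ L, a < n) ∧ wordProd L = w ∧ L.length = m}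

/-- `L` is a reduced word of `w` in `W(B_n)`. -/
def IsReducedWord (n : ℕ) (w : Equiv.Perm ℤ) (L : List ℕ) : Prop :=
  (∀ a ∈ L, a < n) ∧ wordProd L = w ∧ L.length = lengthB n w

/-- The vector `e_k` (for `k ≥ 1` the `k`-th standard basis vector, with the
conventions `e 0 = 0` and `e (-k) = - e k`), represented as an odd function `ℤ → ℤ`. -/
def eVec (k : ℤ) : ℤ → ℤ :=
  fun t => if t = 0 then 0 else if t = k then 1 else if t = -k then -1 else 0

/-- The positive roots of type `B_n`. -/
def PosRoots (n : ℕ) : Set (ℤ → ℤ) :=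
  {v | (∃ i j : ℤ, 1 ≤ i ∧ i < j ∧ j ≤ (n : ℤ) ∧
        (v = eVec j - eVec i ∨ v = eVec j + eVec i)) ∨
       (∃ i : ℤ, 1 ≤ i ∧ i ≤ (n : ℤ) ∧ v = eVec i)}

/-- The action of a signed permutation on vectors: `w · e_i = e_{w(i)}`. -/
def actB (w : Equiv.Perm ℤ) (v : ℤ → ℤ) : ℤ → ℤ := fun t => v (w⁻¹ t)

/-- The inversion set `Inv(w) = {α ∈ Φ⁺ : w⁻¹ · α ∈ -Φ⁺}`. -/
def InvSet (n : ℕ) (w : Equiv.Perm ℤ) : Set (ℤ → ℤ) :=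
  {α | α ∈ PosRoots n ∧ -(actB w⁻¹ α) ∈ PosRoots n}

/-- The simple roots: `α_0 = e_1` and `α_a = e_{a+1} - e_a` for `a ≥ 1`. -/
def alphaRoot (a : ℕ) : ℤ → ℤ :=
  if a = 0 then eVec 1 else eVec ((a : ℤ) + 1) - eVec (a : ℤ)

/-- The reflection order of a word: `reflOrder L t = γ_{t+1} = s_{a_1} ⋯ s_{a_t} · α_{a_{t+1}}`
(0-indexed). -/
def reflOrder (L : List ℕ) (t : ℕ) : ℤ → ℤ :=
  actB (wordProd (L.take t)) (alphaRoot (L.getD t 0))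

/-- The trapezoid `Z(d,r) = (r+2d-1, r+2d-3, …, r+1)`. -/
def Zlam (d r : ℕ) : ℕ → ℕ := fun i => r + 2 * d + 1 - 2 * i

/-- The labeling `f : D(Z(d,r)) → Φ⁺`. -/
def fLabel (d r : ℕ) (p : ℤ × ℤ) : ℤ → ℤ :=
  if p.2 ≤ 0 then eVec ((d : ℤ) + 1 - p.1) - eVec p.2
  else if p.2 ≤ (r : ℤ) then eVec ((d : ℤ) + 1 - p.1) + eVec (p.2 + (d : ℤ))
  else eVec ((d : ℤ) + 1 - p.1) - eVec (p.2 - (r : ℤ))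

/-- The extended labeling `f̃`, with `f̃(i, i - d - 1) = 2 e_{d+1-i}`. -/
def fExtLabel (d r : ℕ) (p : ℤ × ℤ) : ℤ → ℤ :=
  if p.2 = p.1 - ((d : ℤ) + 1) then (2 : ℤ) • eVec ((d : ℤ) + 1 - p.1)
  else fLabel d r p

/-- `w` is the signed permutation `w^{(d,r)} ∈ W(B_{d+r})`, i.e.
`w(i) = d + i` for `1 ≤ i ≤ r` and `w(i) = -(i - r)` for `r < i ≤ d + r`. -/
def IsWdr (d r : ℕ) (w : Equiv.Perm ℤ) : Prop :=
  IsSignedPerm (d + r) w ∧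
    (∀ i : ℤ, 1 ≤ i → i ≤ (r : ℤ) → w i = (d : ℤ) + i) ∧
    (∀ i : ℤ, (r : ℤ) < i → i ≤ (d : ℤ) + (r : ℤ) → w i = -(i - r))


/-- `x` lies strictly between `y` and `z` (i.e. `min(y,z) < x < max(y,z)`). -/
def Between (x y z : ℕ) : Prop := (y < x ∧ x < z) ∨ (z < x ∧ x < y)

/-- A nonempty list is unimodal: strictly decreasing down to its minimum
(at 0-indexed position `k`), then strictly increasing. -/
def Unimodal (L : List ℕ) : Prop :=
  ∃ k : ℕ, k < L.length ∧
    (∀ a b : ℕ, a < b → b ≤ k → L.getD b 0 < L.getD a 0) ∧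
    (∀ a b : ℕ, k ≤ a → a < b → b < L.length → L.getD a 0 < L.getD b 0)

/-- Row `i` of the distinguished tableau of shape `Z(d,r)`:
`(r+d-i, …, r+1, 0, 1, …, r+d-i)`. -/
def rowWord (d r i : ℕ) : List ℕ :=
  (List.range (r + 2 * (d - i) + 1)).map fun t =>
    if t < d - i then r + (d - i) - t else t - (d - i)

/-- The reading word `π(T) = T_d T_{d-1} ⋯ T_1` of the distinguished tableau of
shape `Z(d,r)`. -/
def piWord (d r : ℕ) : List ℕ :=
  (List.range d).flatMap fun k => rowWord d r (d - k)

/-- `μ_i = Z(d,r)_i - λ_i`. -/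
def muF (d r : ℕ) (lam : ℕ → ℕ) (i : ℕ) : ℕ := r + 2 * d + 1 - 2 * i - lam i

/-- `σ_i = μ_1 + ⋯ + μ_i`. -/
def sigmaF (d r : ℕ) (lam : ℕ → ℕ) (i : ℕ) : ℕ := ∑ t ∈ Finset.Icc 1 i, muF d r lam t

/-- `ν_i = min{μ_i, …, μ_d}`. -/
noncomputable def nuF (d r : ℕ) (lam : ℕ → ℕ) (i : ℕ) : ℕ :=
  sInf {m : ℕ | ∃ j : ℕ, i ≤ j ∧ j ≤ d ∧ m = muF d r lam j}

/-- The word `a^λ`: the concatenation over `i = 1, …, d` of the increasing runs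
`(d+r-i-μ_i+1, …, d+r-i)`. -/
def aLamWord (d r : ℕ) (lam : ℕ → ℕ) : List ℕ :=
  (List.range d).flatMap fun k =>
    (List.range (muF d r lam (k + 1))).map fun t =>
      d + r - (k + 1) - muF d r lam (k + 1) + 1 + t

/-- Row `i` of the tableau `P(w^λ)`: entries `P(i,c) = c` for `c ≥ 0` and
`P(i,c) = r - c - ν_{d+1+c}` for `c < 0`. -/
noncomputable def rowWordP (d r : ℕ) (lam : ℕ → ℕ) (i : ℕ) : List ℕ :=
  (List.range (lam i)).map fun t =>
    if t < d - i then r + (d - i) - t - nuF d r lam (i + 1 + t) else t - (d - i)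

/-- The reading word `π(P(w^λ))`. -/
noncomputable def piWordP (d r : ℕ) (lam : ℕ → ℕ) : List ℕ :=
  (List.range d).flatMap fun k => rowWordP d r lam (d - k)

/-- The shape obtained from `λ` by adding one box at the end of row `i`. -/
def stepShape (lam : ℕ → ℕ) (i : ℕ) : ℕ → ℕ :=
  fun t => if t = i then lam i + 1 else lam t

/-- The box-adding map `f_i` on fillings: swap columns `j = λ_i + i - d` and `j + 1`
(in rows `1, …, i-1`), and put the value `N + 1` in the new box `(i, j)`. -/
def addBox (d : ℕ) (lam : ℕ → ℕ) (i : ℕ) (N : ℕ) (B : ℤ × ℤ → ℕ) : ℤ × ℤ → ℕ :=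
  fun p =>
    if p = ((i : ℤ), (lam i : ℤ) + (i : ℤ) - (d : ℤ)) then N + 1
    else if 1 ≤ p.1 ∧ p.1 < (i : ℤ) ∧ p.2 = (lam i : ℤ) + (i : ℤ) - (d : ℤ) then
      B (p.1, p.2 + 1)
    else if 1 ≤ p.1 ∧ p.1 < (i : ℤ) ∧ p.2 = (lam i : ℤ) + (i : ℤ) - (d : ℤ) + 1 then
      B (p.1, p.2 - 1)
    else B p

/-- Successively apply the box-adding maps along a list of row indices,
tracking the current shape. -/
def FmapAux (d : ℕ) : List ℕ → (ℕ → ℕ) → (ℤ × ℤ → ℕ) → (ℤ × ℤ → ℕ)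
  | [], _, B => B
  | i :: rest, lam, B => FmapAux d rest (stepShape lam i) (addBox d lam i (sizeP d lam) B)

/-- The shape after successively adding boxes along a list of row indices. -/
def shapeAux : List ℕ → (ℕ → ℕ) → (ℕ → ℕ)
  | [], lam => lam
  | i :: rest, lam => shapeAux rest (stepShape lam i)

/-- The list of row indices `1^{μ_1} 2^{μ_2} ⋯ d^{μ_d}` used to pad `λ` to `Z(d,r)`. -/
def rowsList (d r : ℕ) (lam : ℕ → ℕ) : List ℕ :=
  (List.range d).flatMap fun k => List.replicate (muF d r lam (k + 1)) (k + 1)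

/-- `BS(Z(d,r))|_λ`: balanced tableaux of shape `Z(d,r)` such that for each
`i ∈ {1,…,d}` the entries `N + σ_{i-1} + 1, …, N + σ_i` all occur in row `i`. -/
def BSRestricted (d r : ℕ) (lam : ℕ → ℕ) : Set (ℤ × ℤ → ℕ) :=
  {T | IsBalanced d (Zlam d r) T ∧ ∀ i : ℕ, 1 ≤ i → i ≤ d →
    ∀ k : ℕ, sizeP d lam + sigmaF d r lam (i - 1) + 1 ≤ k →
      k ≤ sizeP d lam + sigmaF d r lam i →
      ∃ c : ℤ, ((i : ℤ), c) ∈ Diagram d (Zlam d r) ∧ T ((i : ℤ), c) = k}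

/-- `w ∈ W(B_n)` pattern embeds the signed pattern `v` (given as its one-line
notation, a list of nonzero integers). -/
def PatternEmbeds (n : ℕ) (w : Equiv.Perm ℤ) (v : List ℤ) : Prop :=
  ∃ idx : Fin v.length → ℤ, StrictMono idx ∧
    (∀ j, 1 ≤ idx j ∧ idx j ≤ (n : ℤ)) ∧
    (∀ j, 0 < w (idx j) ↔ 0 < v.get j) ∧
    (∀ j k, |w (idx j)| < |w (idx k)| ↔ |v.get j| < |v.get k|)

/-!
Fix a signed permutation `v` and a position `k`. Billey's transition equation says that the Bruhat
covers `v t_{kx}` with `x > k` have as many reduced words in total as those with `x < k`. It is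
proved by induction on the length of `v`: strip a left descent `s_j` off every cover. By the lifting
property the result agrees with the equation for `s_j v`, except for one term equal to `±` the
number of reduced words of `v` whenever `s_j` moves `v k`. The sign is that of `s_j (v k) - v k`,
and these signs cancel in the sum over `j`.

When `v` has a single cover on one side of `k` and at most one on the other, the equation says that
two signed permutations have equally many reduced words. A chain of such equalities, which moves the
negative entries of `w^{(d,r)}` to the front one pass at a time, ends at the signed permutation
`-(r+2d-1), …, -(r+3), -(r+1)` followed by the remaining positive values in increasing order. This
is Grassmannian: its left descents correspond to the removable boxes of the shifted shape `Z(d,r)`,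
so its reduced words satisfy the same recursion as the standard tableaux of shape `Z(d,r)`.
-/

section Group

variable {w : Equiv.Perm ℤ} {n : ℕ} {a b : ℤ}

lemma IsSignedPerm.mul {u : Equiv.Perm ℤ} (hu : IsSignedPerm n u) (hw : IsSignedPerm n w) :
    IsSignedPerm n (u * w) :=
  ⟨fun i => by simp [hw.1, hu.1], fun i hi => by rw [Equiv.Perm.mul_apply, hw.2 i hi, hu.2 i hi]⟩

lemma IsSignedPerm.inv (hw : IsSignedPerm n w) : IsSignedPerm n w⁻¹ := by
  refine ⟨fun i => ?_, fun i hi => ?_⟩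
  · rw [Equiv.Perm.inv_eq_iff_eq, hw.1]; simp
  · rw [Equiv.Perm.inv_eq_iff_eq, hw.2 i hi]

lemma IsSignedPerm.mono {m : ℕ} (hw : IsSignedPerm m w) (h : m ≤ n) : IsSignedPerm n w :=
  ⟨hw.1, fun i hi => hw.2 i (by omega)⟩

/-- The union over `n` of the hyperoctahedral groups `W(B_n)`, each realized as permutations
of `ℤ`. -/
def signedPerms : Subgroup (Equiv.Perm ℤ) where
  carrier := {w | ∃ n, IsSignedPerm n w}
  mul_mem' := fun ⟨m, hu⟩ ⟨n, hv⟩ =>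
    ⟨max m n, (hu.mono (le_max_left m n)).mul (hv.mono (le_max_right m n))⟩
  one_mem' := ⟨0, by simp [IsSignedPerm]⟩
  inv_mem' := fun ⟨n, hw⟩ => ⟨n, hw.inv⟩

lemma IsSignedPerm.mem_signedPerms (hw : IsSignedPerm n w) : w ∈ signedPerms := ⟨n, hw⟩

lemma odd_of_mem_signedPerms (hw : w ∈ signedPerms) : Function.Odd w :=
  hw.elim fun _ h => h.1

lemma apply_ne_zero (hw : w ∈ signedPerms) (ha : a ≠ 0) : w a ≠ 0 :=
  (odd_of_mem_signedPerms hw).map_zero ▸ w.injective.ne ha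

lemma IsSignedPerm.abs_apply_le (hw : IsSignedPerm n w) (ha : |a| ≤ n) : |w a| ≤ n := by
  by_contra! h
  rw [w.injective (hw.2 _ h)] at h
  omega

/-- The reflection `t_{ab}` of `ℤ`, exchanging `a` with `b` and `-a` with `-b`. -/
def reflB (a b : ℤ) : Equiv.Perm ℤ :=
  if a = -b then Equiv.swap a b else Equiv.swap a b * Equiv.swap (-a) (-b)

lemma reflB_apply (ha : a ≠ 0) (hb : b ≠ 0) (x : ℤ) :
    reflB a b x = if x = a then b else if x = b then a else if x = -a then -b
      else if x = -b then -a else x := by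
  unfold reflB
  split_ifs with h0 <;> simp only [Equiv.Perm.mul_apply, Equiv.swap_apply_def] <;> grind

lemma reflB_self (a : ℤ) : reflB a a = 1 := by
  rw [reflB, Equiv.swap_self, Equiv.swap_self]
  exact ite_self 1

lemma reflB_comm (a b : ℤ) : reflB a b = reflB b a := by
  simp only [reflB, Equiv.swap_comm b, Equiv.swap_comm (-b), neg_eq_iff_eq_neg.symm.trans eq_comm]

lemma reflB_neg_neg (ha : a ≠ 0) (hb : b ≠ 0) : reflB (-a) (-b) = reflB a b := by
  ext x
  rw [reflB_apply ha hb, reflB_apply (neg_ne_zero.2 ha) (neg_ne_zero.2 hb)]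
  grind

lemma reflB_mul_self (ha : a ≠ 0) (hb : b ≠ 0) : reflB a b * reflB a b = 1 := by
  ext x
  simp only [Equiv.Perm.mul_apply, reflB_apply ha hb, Equiv.Perm.one_apply]
  grind

lemma mul_reflB (hw : w ∈ signedPerms) (a b : ℤ) : w * reflB a b = reflB (w a) (w b) * w := by
  have h_odd := odd_of_mem_signedPerms hw
  have h_iff : a = -b ↔ w a = -w b := by rw [← h_odd, w.injective.eq_iff]
  unfold reflB
  by_cases h : a = -b
  · rw [if_pos h, if_pos (h_iff.1 h), Equiv.mul_swap_eq_swap_mul]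
  · rw [if_neg h, if_neg (h_iff.not.1 h), ← h_odd, ← h_odd, ← mul_assoc,
      Equiv.mul_swap_eq_swap_mul w a b, mul_assoc, Equiv.mul_swap_eq_swap_mul w, mul_assoc]

lemma isSignedPerm_reflB (ha : a ≠ 0) (hb : b ≠ 0) (ha' : |a| ≤ n) (hb' : |b| ≤ n) :
    IsSignedPerm n (reflB a b) := by
  refine ⟨fun i => ?_, fun i hi => ?_⟩ <;> simp only [reflB_apply ha hb] <;> grind

lemma reflB_mem_signedPerms (ha : a ≠ 0) (hb : b ≠ 0) : reflB a b ∈ signedPerms :=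
  (isSignedPerm_reflB (n := max a.natAbs b.natAbs) ha hb (by grind) (by grind)).mem_signedPerms

/-- The predecessor of `j + 1` in `ℤ ∖ {0}`, so that the simple reflection `s_j` is the reflection
exchanging `nzPred j` with `j + 1`. -/
def nzPred (j : ℕ) : ℤ := if j = 0 then -1 else j

lemma nzPred_ne_zero (j : ℕ) : nzPred j ≠ 0 := by grind [nzPred]

lemma nzPred_lt (j : ℕ) : nzPred j < (j : ℤ) + 1 := by grind [nzPred]

lemma sB_eq_reflB (j : ℕ) : sB j = reflB (nzPred j) (j + 1) := by
  unfold sB reflB nzPred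
  split_ifs with h₁ h₂ h₂
  · simp [h₁, Equiv.swap_comm]
  · simp [h₁] at h₂
  · omega
  · rw [neg_add, sub_eq_add_neg]

variable (j : ℕ)

lemma sB_apply (x : ℤ) :
    sB j x = if x = nzPred j then (j : ℤ) + 1 else if x = j + 1 then nzPred j
      else if x = -nzPred j then -((j : ℤ) + 1) else if x = -(j + 1) then -nzPred j else x := by
  rw [sB_eq_reflB, reflB_apply (nzPred_ne_zero j) (by omega)]

@[simp]
lemma sB_apply_succ : sB j (j + 1) = nzPred j := by
  grind [sB_apply, nzPred_lt]

@[simp]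
lemma sB_apply_nzPred : sB j (nzPred j) = j + 1 := by
  grind [sB_apply]

lemma sB_mul_self : sB j * sB j = 1 := by
  rw [sB_eq_reflB, reflB_mul_self (nzPred_ne_zero j) (by omega)]

@[simp]
lemma sB_mul_sB_mul (w : Equiv.Perm ℤ) : sB j * (sB j * w) = w := by
  rw [← mul_assoc, sB_mul_self, one_mul]

@[simp]
lemma sB_sB_apply (x : ℤ) : sB j (sB j x) = x := DFunLike.congr_fun (sB_mul_self j) x

lemma sB_inv : (sB j)⁻¹ = sB j := inv_eq_of_mul_eq_one_left (sB_mul_self j)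

lemma isSignedPerm_sB {j : ℕ} (hj : j < n) : IsSignedPerm n (sB j) := by
  rw [sB_eq_reflB]
  exact isSignedPerm_reflB (nzPred_ne_zero j) (by omega) (by grind [nzPred]) (by grind)

lemma sB_mem_signedPerms : sB j ∈ signedPerms := (isSignedPerm_sB j.lt_succ_self).mem_signedPerms

lemma sB_mul_mem (hw : w ∈ signedPerms) : sB j * w ∈ signedPerms :=
  mul_mem (sB_mem_signedPerms j) hw

lemma IsSignedPerm.sB_mul {j : ℕ} (hw : IsSignedPerm n w) (hj : j < n) :
    IsSignedPerm n (sB j * w) :=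
  (isSignedPerm_sB hj).mul hw

variable {j}

lemma eq_or_eq_of_sB_lt (ha : a ≠ 0) (hb : b ≠ 0) (hab : a < b) (h : sB j b < sB j a) :
    (a = nzPred j ∧ b = j + 1) ∨ (a = -(j + 1) ∧ b = -nzPred j) := by
  rw [sB_apply, sB_apply] at h
  unfold nzPred at *
  split_ifs at * <;> omega

lemma reflB_eq_sB_of_sB_lt (ha : a ≠ 0) (hb : b ≠ 0) (hab : a < b) (h : sB j b < sB j a) :
    reflB a b = sB j := by
  rw [sB_eq_reflB]
  obtain ⟨rfl, rfl⟩ | ⟨rfl, rfl⟩ := eq_or_eq_of_sB_lt ha hb hab h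
  · rfl
  · rw [reflB_neg_neg (by omega) (nzPred_ne_zero j), reflB_comm]

end Group

section Words

variable {v w : Equiv.Perm ℤ} {n j : ℕ} {L : List ℕ} {a b : ℤ}

lemma wordProd_cons (j : ℕ) (L : List ℕ) : wordProd (j :: L) = sB j * wordProd L := by
  simp [wordProd]

lemma exists_lt_sB_apply (ha : a ≠ 0) (h_abs : |a| ≤ n) (h : a < n) : ∃ j < n, a < sB j a := by
  rcases lt_trichotomy a (-1) with h₁ | rfl | h₁
  · exact ⟨(-a - 1).toNat, by grind, by grind [sB_apply, nzPred]⟩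
  · exact ⟨0, by grind, by grind [sB_apply, nzPred]⟩
  · exact ⟨a.toNat, by grind, by grind [sB_apply, nzPred]⟩

lemma IsSignedPerm.exists_wordProd (hw : IsSignedPerm n w) : ∃ L, wordProd L = w := by
  induction n generalizing w with
  | zero =>
    refine ⟨[], Equiv.ext fun i => ?_⟩
    rcases eq_or_ne i 0 with rfl | hi
    · exact (odd_of_mem_signedPerms hw.mem_signedPerms).map_zero.symm
    · exact (hw.2 i (by simpa using hi)).symm
  | succ n ih =>
    induction h_gap : (n + 1 - w (n + 1)).toNat using Nat.strong_induction_on generalizing w with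
    | _ m ih_gap =>
      by_cases h_top : w (n + 1) = n + 1
      · refine ih ⟨hw.1, fun i hi => ?_⟩
        have h_neg := hw.1 (n + 1)
        have h_beyond := hw.2 i
        grind
      · have h_abs : |w (n + 1)| ≤ (n + 1 : ℕ) := hw.abs_apply_le (by grind)
        have h_ne : w (n + 1) ≠ 0 := apply_ne_zero hw.mem_signedPerms (by omega)
        obtain ⟨j, hj, h_lt⟩ := exists_lt_sB_apply h_ne h_abs (by grind)
        obtain ⟨L, hL⟩ := ih_gap _ (by rw [Equiv.Perm.mul_apply]; grind) (hw.sB_mul hj) rfl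
        exact ⟨j :: L, by rw [wordProd_cons, hL, sB_mul_sB_mul]⟩

/-- The Coxeter length of a signed permutation, computed in the union of all the `W(B_n)`.
It is `0` off `signedPerms`, where `sInf` is taken over the empty set. -/
noncomputable def wordLength (w : Equiv.Perm ℤ) : ℕ :=
  sInf (List.length '' {L | wordProd L = w})

/-- `L` is a reduced word of `w` in the union of all the `W(B_n)`. -/
def IsMinWord (w : Equiv.Perm ℤ) (L : List ℕ) : Prop :=
  wordProd L = w ∧ L.length = wordLength w

/-- `s_j` is a left descent of `w`. -/
def IsLeftDescent (j : ℕ) (w : Equiv.Perm ℤ) : Prop :=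
  wordLength (sB j * w) < wordLength w

lemma wordLength_le (hL : wordProd L = w) : wordLength w ≤ L.length :=
  Nat.sInf_le ⟨L, hL, rfl⟩

lemma exists_isMinWord (hw : w ∈ signedPerms) : ∃ L, IsMinWord w L := by
  obtain ⟨n, hn⟩ := hw
  obtain ⟨L, hL⟩ := hn.exists_wordProd
  exact Nat.sInf_mem (s := List.length '' {L | wordProd L = w}) ⟨_, L, hL, rfl⟩

lemma exists_wordProd_eraseIdx (L : List ℕ) (ha : a ≠ 0) (hb : b ≠ 0) (hab : a < b)
    (h : (wordProd L)⁻¹ b < (wordProd L)⁻¹ a) :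
    ∃ i < L.length, wordProd (L.eraseIdx i) = reflB a b * wordProd L := by
  induction L generalizing a b with
  | nil => exact absurd h hab.asymm
  | cons j L ih =>
    rw [wordProd_cons]
    rcases (EquivLike.injective (sB j)).ne hab.ne |>.lt_or_gt with hj | hj
    · have h_inv : (wordProd L)⁻¹ (sB j b) < (wordProd L)⁻¹ (sB j a) := by
        simpa [wordProd_cons, sB_inv] using h
      obtain ⟨i, hi, hL⟩ := ih (apply_ne_zero (sB_mem_signedPerms j) ha)
        (apply_ne_zero (sB_mem_signedPerms j) hb) hj h_inv
      refine ⟨i + 1, by simpa using hi, ?_⟩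
      rw [List.eraseIdx_cons_succ, wordProd_cons, hL, ← mul_assoc,
        mul_reflB (sB_mem_signedPerms j), sB_sB_apply, sB_sB_apply, mul_assoc]
    · exact ⟨0, by simp, by simp [reflB_eq_sB_of_sB_lt ha hb hab hj]⟩

lemma wordLength_mul_reflB_lt (hv : v ∈ signedPerms) (ha : a ≠ 0) (hb : b ≠ 0) (hab : a < b)
    (h : v b < v a) : wordLength (v * reflB a b) < wordLength v := by
  obtain ⟨L, rfl, h_len⟩ := exists_isMinWord hv
  obtain ⟨i, hi, hL⟩ := exists_wordProd_eraseIdx L (apply_ne_zero hv hb) (apply_ne_zero hv ha) h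
    (by simpa using hab)
  rw [mul_reflB hv, reflB_comm, ← hL]
  have h_erase := wordLength_le (L := L.eraseIdx i) rfl
  have := L.length_eraseIdx_add_one hi
  omega

lemma lt_wordLength_mul_reflB (hv : v ∈ signedPerms) (ha : a ≠ 0) (hb : b ≠ 0) (hab : a < b)
    (h : v a < v b) : wordLength v < wordLength (v * reflB a b) := by
  have h_swap := wordLength_mul_reflB_lt (mul_mem hv (reflB_mem_signedPerms ha hb)) ha hb hab
    (by simpa [reflB_apply ha hb, hab.ne'] using h)
  rwa [mul_assoc, reflB_mul_self ha hb, mul_one] at h_swap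

lemma sB_mul_eq_mul_reflB (hw : w ∈ signedPerms) (j : ℕ) :
    sB j * w = w * reflB (w⁻¹ (nzPred j)) (w⁻¹ (j + 1)) := by
  rw [mul_reflB hw, sB_eq_reflB]
  simp

lemma isLeftDescent_iff (hw : w ∈ signedPerms) :
    IsLeftDescent j w ↔ w⁻¹ (j + 1) < w⁻¹ (nzPred j) := by
  have ha : w⁻¹ (nzPred j) ≠ 0 := apply_ne_zero (inv_mem hw) (nzPred_ne_zero j)
  have hb : w⁻¹ (j + 1) ≠ 0 := apply_ne_zero (inv_mem hw) (by omega)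
  unfold IsLeftDescent
  rw [sB_mul_eq_mul_reflB hw]
  rcases (w⁻¹.injective.ne (nzPred_lt j).ne).lt_or_gt with h | h
  · exact iff_of_false (lt_wordLength_mul_reflB hw ha hb h (by simpa using nzPred_lt j)).asymm
      h.asymm
  · rw [reflB_comm]
    exact iff_of_true (wordLength_mul_reflB_lt hw hb ha h (by simpa using nzPred_lt j)) h

lemma isLeftDescent_sB_mul_iff (hw : w ∈ signedPerms) :
    IsLeftDescent j (sB j * w) ↔ ¬ IsLeftDescent j w := by
  have h_ne : w⁻¹ (j + 1) ≠ w⁻¹ (nzPred j) := w⁻¹.injective.ne (nzPred_lt j).ne'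
  rw [isLeftDescent_iff (sB_mul_mem j hw), isLeftDescent_iff hw]
  rw [mul_inv_rev, sB_inv, Equiv.Perm.mul_apply, Equiv.Perm.mul_apply, sB_apply_succ,
    sB_apply_nzPred, not_lt, h_ne.symm.le_iff_lt]

lemma wordLength_le_sB_mul_add_one (hw : w ∈ signedPerms) (j : ℕ) :
    wordLength w ≤ wordLength (sB j * w) + 1 := by
  obtain ⟨L, hL, h_len⟩ := exists_isMinWord (sB_mul_mem j hw)
  rw [← h_len]
  exact wordLength_le (L := j :: L) (by rw [wordProd_cons, hL, sB_mul_sB_mul])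

lemma IsLeftDescent.wordLength_eq (hj : IsLeftDescent j w) (hw : w ∈ signedPerms) :
    wordLength w = wordLength (sB j * w) + 1 :=
  (wordLength_le_sB_mul_add_one hw j).antisymm hj

lemma wordLength_sB_mul_of_not_isLeftDescent (hj : ¬ IsLeftDescent j w) (hw : w ∈ signedPerms) :
    wordLength (sB j * w) = wordLength w + 1 := by
  simpa using ((isLeftDescent_sB_mul_iff hw).2 hj).wordLength_eq (sB_mul_mem j hw)

lemma isMinWord_cons_iff (hw : w ∈ signedPerms) :
    IsMinWord w (j :: L) ↔ IsLeftDescent j w ∧ IsMinWord (sB j * w) L := by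
  have h_prod : wordProd (j :: L) = w ↔ wordProd L = sB j * w := by
    rw [wordProd_cons, ← mul_right_inj (sB j), sB_mul_sB_mul]
  rw [IsMinWord, IsMinWord, h_prod, List.length_cons]
  constructor
  · rintro ⟨hL, h_len⟩
    have hj : IsLeftDescent j w := by
      have := wordLength_le hL
      unfold IsLeftDescent
      omega
    exact ⟨hj, hL, by have := hj.wordLength_eq hw; omega⟩
  · rintro ⟨hj, hL, h_len⟩
    exact ⟨hL, by rw [h_len, hj.wordLength_eq hw]⟩

lemma IsSignedPerm.lt_of_isLeftDescent (hw : IsSignedPerm n w) (hj : IsLeftDescent j w) :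
    j < n := by
  by_contra! h
  rw [isLeftDescent_iff hw.mem_signedPerms, hw.inv.2 (j + 1) (by grind)] at hj
  have h_abs : |w⁻¹ (nzPred j)| ≤ (j + 1 : ℕ) :=
    (hw.mono (by omega)).inv.abs_apply_le (by grind [nzPred])
  grind

end Words

section RedCount

variable {w : Equiv.Perm ℤ} {n j : ℕ} {L : List ℕ}

lemma IsMinWord.lt_of_mem (hL : IsMinWord w L) (hw : IsSignedPerm n w) (hj : j ∈ L) : j < n := by
  induction L generalizing w with
  | nil => cases hj
  | cons i L ih =>
    obtain ⟨h_desc, hL⟩ := (isMinWord_cons_iff hw.mem_signedPerms).1 hL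
    have hi : i < n := hw.lt_of_isLeftDescent h_desc
    rcases List.mem_cons.1 hj with rfl | hj
    · exact hi
    · exact ih hL (hw.sB_mul hi) hj

lemma IsSignedPerm.lengthB_eq (hw : IsSignedPerm n w) : lengthB n w = wordLength w := by
  obtain ⟨L, hL⟩ := exists_isMinWord hw.mem_signedPerms
  have h_mem : wordLength w ∈
      {m | ∃ L : List ℕ, (∀ a ∈ L, a < n) ∧ wordProd L = w ∧ L.length = m} :=
    ⟨L, fun _ ha => hL.lt_of_mem hw ha, hL⟩
  refine (Nat.sInf_le h_mem).antisymm (le_csInf ⟨_, h_mem⟩ ?_)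
  rintro _ ⟨L, -, hL, rfl⟩
  exact wordLength_le hL

lemma IsSignedPerm.isReducedWord_iff (hw : IsSignedPerm n w) :
    IsReducedWord n w L ↔ IsMinWord w L := by
  rw [IsReducedWord, hw.lengthB_eq]
  exact ⟨And.right, fun hL => ⟨fun _ ha => hL.lt_of_mem hw ha, hL⟩⟩

lemma finite_isMinWord (hw : w ∈ signedPerms) : Finite {L // IsMinWord w L} := by
  obtain ⟨n, hn⟩ := hw
  refine ((List.finite_length_eq (Fin n) (wordLength w)).image (List.map Fin.val)).subset ?_
  intro L hL
  lift L to List (Fin n) using fun _ ha => IsMinWord.lt_of_mem hL hn ha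
  exact ⟨L, by simpa using hL.2, rfl⟩

lemma isMinWord_one_iff : IsMinWord 1 L ↔ L = [] := by
  have h_len : wordLength 1 = 0 := Nat.eq_zero_of_le_zero (wordLength_le (L := []) rfl)
  rw [IsMinWord, h_len, List.length_eq_zero_iff]
  exact ⟨And.right, by rintro rfl; exact ⟨rfl, rfl⟩⟩

lemma exists_isLeftDescent (hw : w ∈ signedPerms) (hne : w ≠ 1) : ∃ j, IsLeftDescent j w := by
  obtain ⟨_ | ⟨j, L⟩, hL⟩ := exists_isMinWord hw
  · exact absurd hL.1.symm hne
  · exact ⟨j, ((isMinWord_cons_iff hw).1 hL).1⟩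

/-- A reduced word of `w ≠ 1` is a left descent of `w` followed by a reduced word. -/
noncomputable def minWordEquivSigma (hw : w ∈ signedPerms) (hne : w ≠ 1) :
    {L // IsMinWord w L} ≃ Σ j : {j // IsLeftDescent j w}, {L // IsMinWord (sB j * w) L} :=
  Equiv.symm <| Equiv.ofBijective
    (fun p => ⟨p.1 :: p.2, (isMinWord_cons_iff hw).2 ⟨p.1.2, p.2.2⟩⟩) <| by
    constructor
    · rintro ⟨⟨i, hi⟩, K, hK⟩ ⟨⟨j, hj⟩, L, hL⟩ h
      obtain ⟨rfl, rfl⟩ := List.cons.inj (Subtype.mk.inj h)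
      rfl
    · rintro ⟨_ | ⟨j, L⟩, hL⟩
      · exact absurd hL.1.symm hne
      · obtain ⟨hj, hL⟩ := (isMinWord_cons_iff hw).1 hL
        exact ⟨⟨⟨j, hj⟩, L, hL⟩, rfl⟩

/-- The number of reduced words of `w`. -/
noncomputable def redCount (w : Equiv.Perm ℤ) : ℕ := Nat.card {L // IsMinWord w L}

lemma redCount_pos (hw : w ∈ signedPerms) : 0 < redCount w := by
  have := finite_isMinWord hw
  have := nonempty_subtype.2 (exists_isMinWord hw)
  exact Nat.card_pos

open Classical in
lemma redCount_eq_sum (hw : IsSignedPerm n w) (hne : w ≠ 1) :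
    redCount w = ∑ j ∈ Finset.range n with IsLeftDescent j w, redCount (sB j * w) := by
  have h_mem (j : ℕ) : j ∈ {j ∈ Finset.range n | IsLeftDescent j w} ↔ IsLeftDescent j w := by
    simpa using hw.lt_of_isLeftDescent
  have h_fin (j : {j // IsLeftDescent j w}) : Finite {L // IsMinWord (sB j * w) L} :=
    finite_isMinWord (sB_mul_mem j hw.mem_signedPerms)
  have : Fintype {j // IsLeftDescent j w} := Fintype.subtype _ h_mem
  rw [redCount, Nat.card_congr (minWordEquivSigma hw.mem_signedPerms hne), Nat.card_sigma,
    Finset.sum_subtype _ h_mem]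
  rfl

end RedCount

section Transition

variable {v : Equiv.Perm ℤ} {j M : ℕ} {k x : ℤ}

/-- `v t_{kx}` covers `v` in the Bruhat order. -/
def IsCover (v : Equiv.Perm ℤ) (k x : ℤ) : Prop :=
  x ≠ 0 ∧ wordLength (v * reflB k x) = wordLength v + 1

lemma lt_wordLength_mul_reflB_iff (hv : v ∈ signedPerms) (hk : k ≠ 0) (hx : x ≠ 0) (hne : k ≠ x) :
    wordLength v < wordLength (v * reflB k x) ↔ (k < x ↔ v k < v x) := by
  wlog h_lt : k < x generalizing k x
  · have h_gt : x < k := hne.lt_or_gt.resolve_left h_lt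
    have h_ne := v.injective.ne hne
    rw [reflB_comm, this hx hk hne.symm h_gt]
    grind
  · rcases (v.injective.ne hne).lt_or_gt with h | h
    · simp [h_lt, h, lt_wordLength_mul_reflB hv hk hx h_lt h]
    · simp [h_lt, h.asymm, (wordLength_mul_reflB_lt hv hk hx h_lt h).asymm]

lemma IsCover.ne (h : IsCover v k x) : k ≠ x := by
  rintro rfl
  simpa [reflB_self] using h.2

lemma IsCover.lt_iff_lt (h : IsCover v k x) (hv : v ∈ signedPerms) (hk : k ≠ 0) :
    k < x ↔ v k < v x :=
  (lt_wordLength_mul_reflB_iff hv hk h.1 h.ne).1 (by rw [h.2]; omega)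

lemma mul_reflB_mem (hv : v ∈ signedPerms) (hk : k ≠ 0) (hx : x ≠ 0) :
    v * reflB k x ∈ signedPerms :=
  mul_mem hv (reflB_mem_signedPerms hk hx)

-- The lifting property: erase from a reduced word `s_j s_{i_1} ⋯` of `v t_{kx}` the letter whose
-- omission yields `v`; if this is not the first letter, then `s_j` is a left descent of `v`.
lemma IsCover.mul_reflB_eq_sB_mul (h : IsCover v k x) (hv : v ∈ signedPerms) (hk : k ≠ 0)
    (hj : IsLeftDescent j (v * reflB k x)) (hj' : ¬ IsLeftDescent j v) :
    v * reflB k x = sB j * v := by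
  wlog h_lt : k < x generalizing k x
  · rw [reflB_comm]
    refine this ⟨hk, ?_⟩ h.1 ?_ (h.ne.lt_or_gt.resolve_left h_lt) <;> rw [reflB_comm]
    exacts [h.2, hj]
  have hx := h.1
  set u := v * reflB k x with hu
  have hu_mem : u ∈ signedPerms := mul_reflB_mem hv hk hx
  have h_exch : reflB (v k) (v x) * u = v := by
    rw [hu, ← mul_assoc, ← mul_reflB hv, mul_assoc, reflB_mul_self hk hx, mul_one]
  have hu_k : u⁻¹ (v x) = k := by
    rw [Equiv.Perm.inv_eq_iff_eq, hu, Equiv.Perm.mul_apply, reflB_apply hk hx, if_pos rfl]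
  have hu_x : u⁻¹ (v k) = x := by
    rw [Equiv.Perm.inv_eq_iff_eq, hu, Equiv.Perm.mul_apply, reflB_comm, reflB_apply hx hk,
      if_pos rfl]
  obtain ⟨L, hL⟩ := exists_isMinWord (sB_mul_mem j hu_mem)
  have h_word : IsMinWord u (j :: L) := (isMinWord_cons_iff hu_mem).2 ⟨hj, hL⟩
  obtain ⟨_ | i, hi, h_erase⟩ := exists_wordProd_eraseIdx (j :: L) (apply_ne_zero hv hk)
    (apply_ne_zero hv hx) ((h.lt_iff_lt hv hk).1 h_lt) (by rwa [h_word.1, hu_k, hu_x])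
  · have h_tail : wordProd L = v := by rwa [h_word.1, h_exch] at h_erase
    rw [← h_tail, hL.1, sB_mul_sB_mul]
  · rw [h_word.1, h_exch, List.eraseIdx_cons_succ, wordProd_cons] at h_erase
    have h_le : wordLength (sB j * v) ≤ (L.eraseIdx i).length :=
      wordLength_le (by rw [← h_erase, sB_mul_sB_mul])
    have h_len := List.length_eraseIdx_add_one (Nat.lt_of_succ_lt_succ hi)
    have h_len' : L.length + 1 = wordLength u := h_word.2
    have h_cov : wordLength u = wordLength v + 1 := h.2
    exact absurd (show wordLength (sB j * v) < wordLength v by omega) hj'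

lemma isCover_and_isLeftDescent_iff (hv : v ∈ signedPerms) (hk : k ≠ 0)
    (hne : v * reflB k x ≠ sB j * v) :
    IsCover v k x ∧ IsLeftDescent j (v * reflB k x) ↔
      IsLeftDescent j v ∧ IsCover (sB j * v) k x := by
  have hsv := sB_mul_mem j hv
  constructor
  · rintro ⟨h, hj'⟩
    have hj : IsLeftDescent j v := by
      by_contra hj
      exact hne (h.mul_reflB_eq_sB_mul hv hk hj' hj)
    refine ⟨hj, h.1, ?_⟩
    have h_len := hj.wordLength_eq hv
    have h_len' := hj'.wordLength_eq (mul_reflB_mem hv hk h.1)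
    have h_cov := h.2
    rw [mul_assoc]
    omega
  · rintro ⟨hj, h⟩
    have hvt := mul_reflB_mem hv hk h.1
    have h_cov := h.2
    rw [mul_assoc] at h_cov
    have hj' : IsLeftDescent j (v * reflB k x) := by
      by_contra hj'
      have h_lift := h.mul_reflB_eq_sB_mul (j := j) hsv hk
        (by rwa [mul_assoc, isLeftDescent_sB_mul_iff hvt])
        (by rwa [isLeftDescent_sB_mul_iff hv, not_not])
      rw [mul_assoc, mul_right_inj] at h_lift
      exact hne h_lift
    have h_len := hj.wordLength_eq hv
    have h_len' := hj'.wordLength_eq hvt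
    exact ⟨⟨h.1, by omega⟩, hj'⟩

lemma reflB_sB_apply (hx : x ≠ 0) (h : sB j x ≠ x) : reflB x (sB j x) = sB j := by
  have hx' := apply_ne_zero (sB_mem_signedPerms j) hx
  rcases h.lt_or_gt with h | h
  · rw [reflB_comm]
    exact reflB_eq_sB_of_sB_lt hx' hx h (by simpa using h)
  · exact reflB_eq_sB_of_sB_lt hx hx' h (by simpa using h)

lemma sum_sign_sB_apply_sub (hx : x ≠ 0) (hM : |x| ≤ M) :
    ∑ j ∈ Finset.range (M + 1), (sB j x - x).sign = 0 := by
  let c (j : ℕ) : ℤ := (if x = j then 1 else 0) - (if x = -j then 1 else 0)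
  have h_step (j : ℕ) : (sB j x - x).sign = c j - c (j + 1) := by
    rw [sB_apply]
    grind [nzPred]
  simp_rw [h_step]
  rw [Finset.sum_range_sub']
  grind

lemma mul_reflB_eq_sB_mul_iff (hv : v ∈ signedPerms) (hk : k ≠ 0) (hx : x ≠ 0) :
    v * reflB k x = sB j * v ↔ v x = sB j (v k) ∧ sB j (v k) ≠ v k := by
  constructor
  · intro h
    have h_apply : v x = sB j (v k) := by
      simpa [reflB_apply hk hx] using DFunLike.congr_fun h k
    refine ⟨h_apply, fun h_fix => ?_⟩
    have hkx : x = k := v.injective (h_apply.trans h_fix)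
    rw [hkx, reflB_self, mul_one, right_eq_mul] at h
    exact (nzPred_lt j).ne (by simpa [h] using (sB_apply_succ j).symm)
  · rintro ⟨h, h_ne⟩
    rw [mul_reflB hv, h, reflB_sB_apply (apply_ne_zero hv hk) h_ne]

-- Apart from the reflection with `v t_{kx} = s_j v`, the two terms on the left agree.
open Classical in
lemma ite_sub_ite_eq_ite_sign (hv : v ∈ signedPerms) (hk : k ≠ 0) (j : ℕ) (x : ℤ) :
    (if IsCover v k x ∧ IsLeftDescent j (v * reflB k x) then
        (x - k).sign * (redCount (sB j * (v * reflB k x)) : ℤ) else 0) -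
      (if IsLeftDescent j v ∧ IsCover (sB j * v) k x then
        (x - k).sign * (redCount (sB j * v * reflB k x) : ℤ) else 0) =
    if v x = sB j (v k) then (sB j (v k) - v k).sign * (redCount v : ℤ) else 0 := by
  rcases eq_or_ne x 0 with rfl | hx
  · have h_ne : (0 : ℤ) ≠ sB j (v k) :=
      (apply_ne_zero (sB_mem_signedPerms j) (apply_ne_zero hv hk)).symm
    simp [IsCover, (odd_of_mem_signedPerms hv).map_zero, h_ne]
  by_cases h : v * reflB k x = sB j * v
  · obtain ⟨hx_eq, h_moved⟩ := (mul_reflB_eq_sB_mul_iff hv hk hx).1 h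
    have hkx : k ≠ x := by rintro rfl; exact h_moved hx_eq.symm
    have h' : sB j * v * reflB k x = v := by rw [mul_assoc, h, sB_mul_sB_mul]
    rw [if_pos hx_eq, h, isLeftDescent_sB_mul_iff hv, sB_mul_sB_mul, h', ← hx_eq]
    by_cases hj : IsLeftDescent j v
    · have h_cov : IsCover (sB j * v) k x := ⟨hx, by rw [h', hj.wordLength_eq hv]⟩
      have h_lt : k < x ↔ v x < v k := by
        simpa [hx_eq] using h_cov.lt_iff_lt (sB_mul_mem j hv) hk
      rw [if_neg (by tauto), if_pos ⟨hj, h_cov⟩]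
      grind
    · have h_cov : IsCover v k x :=
        ⟨hx, by rw [h, wordLength_sB_mul_of_not_isLeftDescent hj hv]⟩
      have h_lt : k < x ↔ v k < v x := h_cov.lt_iff_lt hv hk
      rw [if_pos ⟨h_cov, hj⟩, if_neg (by tauto)]
      grind
  · simp only [isCover_and_isLeftDescent_iff hv hk h, mul_assoc, sub_self]
    rw [mul_reflB_eq_sB_mul_iff hv hk hx, not_and_not_right] at h
    split_ifs with hx_eq
    · simp [h hx_eq]
    · rfl

lemma IsSignedPerm.mul_reflB (hv : IsSignedPerm M v) (hk : k ≠ 0) (hkM : |k| ≤ M) (hx : x ≠ 0)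
    (hxM : |x| ≤ M + 1) : IsSignedPerm (M + 1) (v * reflB k x) :=
  (hv.mono M.le_succ).mul (isSignedPerm_reflB hk hx (by grind) (by grind))

open Classical in
lemma IsCover.redCount_mul_reflB_eq_sum (h : IsCover v k x) (hv : IsSignedPerm M v) (hk : k ≠ 0)
    (hkM : |k| ≤ M) (hxM : |x| ≤ M + 1) :
    redCount (v * reflB k x) = ∑ j ∈ Finset.range (M + 1) with IsLeftDescent j (v * reflB k x),
      redCount (sB j * (v * reflB k x)) := by
  refine redCount_eq_sum (hv.mul_reflB hk hkM h.1 hxM) fun h_one => ?_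
  have h_len := h.2
  rw [h_one, ← (isMinWord_one_iff.2 rfl).2] at h_len
  simp at h_len

open Classical in
lemma sum_ite_isCover_sub_sum_ite_isCover (hv : IsSignedPerm M v) (hk : k ≠ 0) (hkM : |k| ≤ M)
    (hj : j < M + 1) :
    (∑ x ∈ Finset.Icc (-(M + 1) : ℤ) (M + 1),
        if IsCover v k x ∧ IsLeftDescent j (v * reflB k x) then
          (x - k).sign * (redCount (sB j * (v * reflB k x)) : ℤ) else 0) -
      (∑ x ∈ Finset.Icc (-(M + 1) : ℤ) (M + 1),
        if IsLeftDescent j v ∧ IsCover (sB j * v) k x then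
          (x - k).sign * (redCount (sB j * v * reflB k x) : ℤ) else 0) =
    (sB j (v k) - v k).sign * (redCount v : ℤ) := by
  have hv' := hv.mono M.le_succ
  have h_mem : v⁻¹ (sB j (v k)) ∈ Finset.Icc (-(M + 1) : ℤ) (M + 1) := by
    have := (hv'.inv.mul ((isSignedPerm_sB hj).mul hv')).abs_apply_le (a := k) (by grind)
    rw [Equiv.Perm.mul_apply, Equiv.Perm.mul_apply] at this
    grind
  rw [← Finset.sum_sub_distrib,
    Finset.sum_congr rfl fun x _ => ite_sub_ite_eq_ite_sign hv.mem_signedPerms hk j x]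
  simp only [← Equiv.Perm.eq_inv_iff_eq, Finset.sum_ite_eq', h_mem, if_true]

open Classical in
-- Billey's transition equation for reduced words of signed permutations.
theorem sum_sign_mul_redCount_eq_zero (hv : IsSignedPerm M v) (hk : k ≠ 0) (hkM : |k| ≤ M) :
    ∑ x ∈ Finset.Icc (-(M + 1) : ℤ) (M + 1) with IsCover v k x,
      (x - k).sign * (redCount (v * reflB k x) : ℤ) = 0 := by
  induction h_len : wordLength v using Nat.strong_induction_on generalizing v with
  | _ ℓ ih =>
    have h_expand : ∀ x ∈ Finset.Icc (-(M + 1) : ℤ) (M + 1),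
        (if IsCover v k x then (x - k).sign * (redCount (v * reflB k x) : ℤ) else 0) =
          ∑ j ∈ Finset.range (M + 1), if IsCover v k x ∧ IsLeftDescent j (v * reflB k x) then
            (x - k).sign * (redCount (sB j * (v * reflB k x)) : ℤ) else 0 := by
      intro x hx
      by_cases h : IsCover v k x
      · simp [h, h.redCount_mul_reflB_eq_sum hv hk hkM (by grind), ← Finset.sum_filter,
          Finset.mul_sum]
      · simp [h]
    have h_lower (j : ℕ) : (∑ x ∈ Finset.Icc (-(M + 1) : ℤ) (M + 1),
        if IsLeftDescent j v ∧ IsCover (sB j * v) k x then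
          (x - k).sign * (redCount (sB j * v * reflB k x) : ℤ) else 0) = 0 := by
      by_cases hj : IsLeftDescent j v
      · simp only [hj, true_and, ← Finset.sum_filter]
        exact ih _ (h_len ▸ hj) (hv.sB_mul (hv.lt_of_isLeftDescent hj)) rfl
      · simp [hj]
    have h_moved : ∀ j ∈ Finset.range (M + 1), (∑ x ∈ Finset.Icc (-(M + 1) : ℤ) (M + 1),
        if IsCover v k x ∧ IsLeftDescent j (v * reflB k x) then
          (x - k).sign * (redCount (sB j * (v * reflB k x)) : ℤ) else 0) =
        (sB j (v k) - v k).sign * (redCount v : ℤ) := by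
      intro j hj
      rw [← sum_ite_isCover_sub_sum_ite_isCover hv hk hkM (Finset.mem_range.1 hj), h_lower,
        sub_zero]
    rw [Finset.sum_filter, Finset.sum_congr rfl h_expand, Finset.sum_comm,
      Finset.sum_congr rfl h_moved, ← Finset.sum_mul,
      sum_sign_sB_apply_sub (apply_ne_zero hv.mem_signedPerms hk) (hv.abs_apply_le hkM), zero_mul]

open Classical in
lemma redCount_mul_reflB_eq_redCount_mul_reflB {s z : ℤ} (hv : v ∈ signedPerms) (hk : k ≠ 0)
    (hs : k < s) (hz : z < k) (hz_cov : IsCover v k z)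
    (h_cov : ∀ x, IsCover v k x → x = s ∨ x = z) :
    redCount (v * reflB k s) = redCount (v * reflB k z) := by
  obtain ⟨M, hM, hkM, hsM, hzM⟩ : ∃ M : ℕ, IsSignedPerm M v ∧ |k| ≤ M ∧ |s| ≤ M ∧ |z| ≤ M := by
    obtain ⟨n, hn⟩ := hv
    exact ⟨max n (max k.natAbs (max s.natAbs z.natAbs)), hn.mono (by omega), by grind, by grind,
      by grind⟩
  have h_sum := sum_sign_mul_redCount_eq_zero hM hk hkM
  have h_sign_s : (s - k).sign = 1 := Int.sign_eq_one_of_pos (by omega)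
  have h_sign_z : (z - k).sign = -1 := Int.sign_eq_neg_one_of_neg (by omega)
  by_cases hs_cov : IsCover v k s
  · have h_filter : {x ∈ Finset.Icc (-(M + 1) : ℤ) (M + 1) | IsCover v k x} = {s, z} := by grind
    rw [h_filter, Finset.sum_pair (by omega), h_sign_s, h_sign_z] at h_sum
    omega
  · have h_filter : {x ∈ Finset.Icc (-(M + 1) : ℤ) (M + 1) | IsCover v k x} = {z} := by grind
    have h_pos := redCount_pos (mul_reflB_mem hv hk hz_cov.1)
    rw [h_filter, Finset.sum_singleton, h_sign_z] at h_sum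
    omega

lemma succ_wordLength_lt_of_between {a b c : ℤ} (hv : v ∈ signedPerms) (ha : a ≠ 0) (hb : b ≠ 0)
    (hc : c ≠ 0) (hac : a < c) (hcb : c < b) (hac' : a ≠ -c) (hcb' : c ≠ -b) (hab' : a ≠ -b)
    (hvac : v a < v c) (hvcb : v c < v b) :
    wordLength v + 1 < wordLength (v * reflB a b) := by
  have h_factor : reflB a b = reflB a c * reflB c b * reflB a c := by
    rw [mul_reflB (reflB_mem_signedPerms ha hc), mul_assoc, reflB_mul_self ha hc, mul_one]
    congr 1 <;> rw [reflB_apply ha hc] <;> grind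
  have hv₁ := mul_reflB_mem hv ha hc
  have h₁ := lt_wordLength_mul_reflB hv ha hc hac hvac
  have h₂ := lt_wordLength_mul_reflB hv₁ hc hb hcb
    (by simp only [Equiv.Perm.mul_apply, reflB_apply, ha, hc, ne_eq, not_false_eq_true]; grind)
  have h₃ := lt_wordLength_mul_reflB (mul_reflB_mem hv₁ hc hb) ha hc hac
    (by simp only [Equiv.Perm.mul_apply, reflB_apply, ha, hb, hc, ne_eq, not_false_eq_true]; grind)
  rw [h_factor, ← mul_assoc, ← mul_assoc]
  omega

end Transition

section Pattern

variable {g : ℤ → ℤ} {v w : Equiv.Perm ℤ} {k s : ℤ} {b : ℕ}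

/-- On positive positions, the negative entries of the signed permutation `w` and their places
are recorded by `g` (which is `0` at the other positive positions), and the positive entries of
`w` are increasing. -/
structure HasNegPattern (g : ℤ → ℤ) (w : Equiv.Perm ℤ) : Prop where
  mem : w ∈ signedPerms
  lt_of_pos : ∀ a c, 0 < a → a < c → 0 < w a → 0 < w c → w a < w c
  min_apply : ∀ c, 0 < c → min (w c) 0 = g c

lemma HasNegPattern.congr {g' : ℤ → ℤ} (hw : HasNegPattern g w) (h : ∀ c, 0 < c → g c = g' c) :
    HasNegPattern g' w :=
  ⟨hw.mem, hw.lt_of_pos, fun c hc => (hw.min_apply c hc).trans (h c hc)⟩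

lemma HasNegPattern.apply_eq (hw : HasNegPattern g w) (hk : 0 < k) (h : g k < 0) : w k = g k := by
  grind [hw.min_apply k hk]

lemma HasNegPattern.mul_reflB (hw : HasNegPattern g w) (hk : 0 < k) (hks : k < s) (hs : g s < 0)
    (h_between : ∀ c, k < c → c < s → g c < 0) :
    HasNegPattern (g ∘ Equiv.swap k s) (w * reflB k s) := by
  have h_apply (c : ℤ) (hc : 0 < c) : (w * reflB k s) c = w (Equiv.swap k s c) := by
    rw [Equiv.Perm.mul_apply, reflB_apply hk.ne' (by omega), Equiv.swap_apply_def]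
    grind
  refine ⟨mul_reflB_mem hw.mem hk.ne' (by omega), fun a c ha hac => ?_, fun c hc => ?_⟩
  · rw [h_apply a ha, h_apply c (by omega)]
    have h_eq (x : ℤ) (hx : 0 < x) : g x < 0 → w x < 0 := fun h => by rwa [hw.apply_eq hx h]
    have h_lt := hw.lt_of_pos
    simp only [Equiv.swap_apply_def]
    grind
  · rw [h_apply c hc, hw.min_apply _ (by grind), Function.comp_apply]

lemma HasNegPattern.sB_mul (hv : HasNegPattern g v) (hb : 0 < b) (hk : 0 < k) (hgk : g k = -b)
    (h_succ : ∀ c, 0 < c → g c ≠ -(b + 1 : ℤ)) :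
    HasNegPattern (Function.update g k (-(b + 1 : ℤ))) (sB b * v) := by
  have hvk : v k = -b := by rw [hv.apply_eq hk (by omega), hgk]
  have h_odd := odd_of_mem_signedPerms hv.mem
  have h_apply (c : ℤ) (hc : 0 < c) : (sB b * v) c =
      if c = k then -(b + 1 : ℤ) else if v c = b + 1 then b else v c := by
    have h_min := hv.min_apply c hc
    have h_inj : v c = v k → c = k := fun h => v.injective h
    have h_inj' : v c = v (-k) → c = -k := fun h => v.injective h
    rw [h_odd k] at h_inj'
    rw [Equiv.Perm.mul_apply, sB_apply]
    grind [nzPred]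
  refine ⟨sB_mul_mem b hv.mem, fun a c ha hac => ?_, fun c hc => ?_⟩
  · rw [h_apply a ha, h_apply c (by omega)]
    have h_lt := hv.lt_of_pos a c ha hac
    have h_ne (x : ℤ) (hx : 0 < x) : v x ≠ b := by
      intro h
      have := v.injective (h.trans (by rw [h_odd, hvk, neg_neg] : (b : ℤ) = v (-k)))
      omega
    have h_ne_a := h_ne a ha
    have h_ne_c := h_ne c (by omega)
    split_ifs <;> omega
  · rw [h_apply c hc, Function.update_apply, ← hv.min_apply c hc]
    grind

lemma HasNegPattern.eq_of_isCover_of_lt {x : ℤ} (hv : HasNegPattern g v) (hk : 0 < k)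
    (hks : k < s) (hgk : g k < 0) (hgs : g k < g s)
    (h_between : ∀ c, k < c → c < s → g c < g k) (h_after : ∀ c, s < c → g s < g c ∨ g c = 0)
    (hx : IsCover v k x) (hkx : k < x) : x = s := by
  have hvx : v k < v x := (hx.lt_iff_lt hv.mem hk.ne').1 hkx
  have hvk := hv.apply_eq hk hgk
  have h_min := hv.min_apply
  by_contra hxs
  have hsx : s < x := by grind
  have hvsx : v s < v x := by
    have h_inc := hv.lt_of_pos s x (by omega) hsx
    have h_min_s := h_min s (by omega)
    have h_min_x := h_min x (by omega)
    have h_ne := apply_ne_zero hv.mem (show x ≠ 0 by omega)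
    have h_gx := h_after x hsx
    omega
  have h_lt := succ_wordLength_lt_of_between hv.mem hk.ne' (by omega) (by omega) hks hsx
    (by omega) (by omega) (by omega) (by grind) hvsx
  exact h_lt.ne' hx.2

lemma HasNegPattern.eq_neg_of_isCover_of_gt {x q : ℤ} (hv : HasNegPattern g v) (hk : 0 < k)
    (hb : 0 < b) (hgk : g k = -b) (h_before : ∀ c, 0 < c → c < k → -b ≤ g c) (hq : 0 < q)
    (hvq : v q = b + 1) (hx : IsCover v k x) (hxk : x < k) : x = -q := by
  have hvk : v k = -b := by rw [hv.apply_eq hk (by omega), hgk]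
  have h_odd := odd_of_mem_signedPerms hv.mem
  have hvx : v x < v k := by
    have h_ne := v.injective.ne hx.ne
    have h_iff := hx.lt_iff_lt hv.mem hk.ne'
    grind
  have hx_neg : x < 0 := by
    have h_ne := hx.1
    have h_min := hv.min_apply x
    have h_le := h_before x
    omega
  by_contra hxq
  have hqx : q < -x := by
    have h_inc := hv.lt_of_pos (-x) q (by omega)
    rw [h_odd x] at h_inc
    omega
  have hvxq := v.injective.ne hxq
  rw [h_odd q] at hvxq
  have hxk' : x ≠ -k := by
    rintro rfl
    rw [h_odd] at hvx
    omega
  have hqk : q ≠ k := by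
    rintro rfl
    omega
  have h_lt := succ_wordLength_lt_of_between hv.mem hx.1 hk.ne' (neg_ne_zero.2 hq.ne')
    (by omega) (by omega) (by omega) (by omega) hxk' (by rw [h_odd]; omega) (by rw [h_odd]; omega)
  rw [reflB_comm] at h_lt
  exact h_lt.ne' hx.2

lemma HasNegPattern.redCount_mul_reflB_eq (hv : HasNegPattern g v) (hk : 0 < k) (hks : k < s)
    (hb : 0 < b) (hgk : g k = -b) (hgs : -b < g s) (h_between : ∀ c, k < c → c < s → g c < -b)
    (h_after : ∀ c, s < c → g s < g c ∨ g c = 0) (h_before : ∀ c, 0 < c → c < k → -b ≤ g c)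
    (h_succ : ∀ c, 0 < c → g c ≠ -(b + 1 : ℤ)) :
    redCount (v * reflB k s) = redCount (sB b * v) := by
  have h_odd := odd_of_mem_signedPerms hv.mem
  obtain ⟨q, hvq⟩ := v.surjective (b + 1)
  have hq : 0 < q := by
    by_contra! h
    have hq₀ : q ≠ 0 := by
      rintro rfl
      have := h_odd.map_zero
      omega
    have h_min := hv.min_apply (-q) (by omega)
    exact h_succ (-q) (by omega) (by rw [← h_min, h_odd, hvq]; omega)
  have hb_inv : v⁻¹ b = -k := by
    rw [Equiv.Perm.inv_eq_iff_eq, h_odd, hv.apply_eq hk (by omega), hgk, neg_neg]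
  have hq_inv : v⁻¹ (b + 1) = q := by rw [Equiv.Perm.inv_eq_iff_eq, hvq]
  have h_pred : nzPred b = b := if_neg hb.ne'
  have h_refl : v * reflB k (-q) = sB b * v := by
    rw [sB_mul_eq_mul_reflB hv.mem, h_pred, hb_inv, hq_inv,
      ← reflB_neg_neg hk.ne' (neg_ne_zero.2 hq.ne'), neg_neg]
  have h_cov : IsCover v k (-q) := by
    refine ⟨by omega, ?_⟩
    rw [h_refl, wordLength_sB_mul_of_not_isLeftDescent _ hv.mem]
    rw [isLeftDescent_iff hv.mem, h_pred, hb_inv, hq_inv]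
    omega
  rw [← h_refl]
  refine redCount_mul_reflB_eq_redCount_mul_reflB hv.mem hk.ne' hks (by omega) h_cov fun x hx => ?_
  rcases hx.ne.lt_or_gt with h | h
  · exact Or.inl <|
      hv.eq_of_isCover_of_lt hk hks (by omega) (by omega) (by simpa [hgk]) h_after hx h
  · exact Or.inr <| hv.eq_neg_of_isCover_of_gt hk hb hgk h_before hq hvq hx h

lemma HasNegPattern.exists_redCount_eq (hw : HasNegPattern g w) (hk : 0 < k) (hks : k < s)
    (hb : 0 < b) (hgs : g s = -b) (hgk : -b < g k) (h_between : ∀ c, k < c → c < s → g c < -b)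
    (h_after : ∀ c, s < c → g k < g c ∨ g c = 0) (h_before : ∀ c, 0 < c → c < k → -b ≤ g c)
    (h_succ : ∀ c, 0 < c → g c ≠ -(b + 1 : ℤ)) :
    ∃ w', HasNegPattern (Function.update (g ∘ Equiv.swap k s) k (-(b + 1 : ℤ))) w' ∧
      redCount w = redCount w' := by
  have h_of_ne (c : ℤ) (h₁ : c ≠ k) (h₂ : c ≠ s) : (g ∘ Equiv.swap k s) c = g c := by
    rw [Function.comp_apply, Equiv.swap_apply_of_ne_of_ne h₁ h₂]
  have h_k : (g ∘ Equiv.swap k s) k = -b := by simpa using hgs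
  have h_s : (g ∘ Equiv.swap k s) s = g k := by simp
  have hv := hw.mul_reflB hk hks (by omega) (by grind)
  have h_succ' (c : ℤ) (hc : 0 < c) : (g ∘ Equiv.swap k s) c ≠ -(b + 1 : ℤ) := by grind
  refine ⟨_, hv.sB_mul hb hk h_k h_succ', ?_⟩
  rw [← hv.redCount_mul_reflB_eq hk hks hb h_k (by omega) (by grind) (by grind) (by grind) h_succ',
    mul_assoc, reflB_mul_self hk.ne' (by omega), mul_one]

end Pattern

section Path

variable {w : Equiv.Perm ℤ} {r k m y : ℤ}

/-- The negative entries after `j` steps of the pass that moves the entry at position `k` to the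
end of a block of `m` negative entries. At `j = 0` positions `k + 1, …, k + m` hold
`-(y + 2m - 1), …, -(y + 3), -(y + 1)`. Positions `c ≤ k` hold `r - c` when this is negative. -/
def passPattern (r k m y j c : ℤ) : ℤ :=
  if c < k then min 0 (r - c)
  else if c = k then if j = 0 then min 0 (r - k) else -(y + 2 * j)
  else if c ≤ k + m - j then -(y + 2 * (k + m - c) + 1)
  else if c < k + m then -(y + 2 * (k + m - c))
  else if c = k + m then min 0 (r - k)
  else 0

lemma HasNegPattern.exists_passPattern_succ {j : ℤ} (hw : HasNegPattern (passPattern r k m y j) w)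
    (hk : 0 < k) (hy : 0 ≤ y) (hkr : k ≤ r + y) (hj : 0 ≤ j) (hjm : j < m) :
    ∃ w', HasNegPattern (passPattern r k m y (j + 1)) w' ∧ redCount w = redCount w' := by
  obtain ⟨b, hb⟩ := Int.eq_ofNat_of_zero_le (show 0 ≤ y + 2 * j + 1 by omega)
  obtain ⟨w', hw', h_eq⟩ := hw.exists_redCount_eq (s := k + m - j) (b := b) hk (by omega) (by omega)
    (by grind [passPattern]) (by grind [passPattern]) (by grind [passPattern])
    (by grind [passPattern]) (by grind [passPattern]) (by grind [passPattern])
  refine ⟨w', hw'.congr fun c hc => ?_, h_eq⟩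
  rw [Function.update_apply, Function.comp_apply, Equiv.swap_apply_def]
  grind [passPattern]

lemma HasNegPattern.exists_passPattern (hw : HasNegPattern (passPattern r k m y 0) w)
    (hk : 0 < k) (hy : 0 ≤ y) (hkr : k ≤ r + y) (j : ℕ) (hjm : j ≤ m) :
    ∃ w', HasNegPattern (passPattern r k m y j) w' ∧ redCount w = redCount w' := by
  induction j with
  | zero => exact ⟨w, hw, rfl⟩
  | succ j ih =>
    push_cast at hjm
    obtain ⟨v, hv, h_eq⟩ := ih (by omega)
    obtain ⟨w', hw', h_eq'⟩ := hv.exists_passPattern_succ hk hy hkr (by omega) (by omega)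
    exact ⟨w', by exact_mod_cast hw', h_eq.trans h_eq'⟩

/-- The negative entries reached from `w^{(d,r)}` after `n` passes. -/
def trapezoidPattern (d r n : ℕ) : ℤ → ℤ :=
  passPattern r (r + d - n) (min d n : ℕ) |(d - n : ℤ)| 0

lemma IsWdr.hasNegPattern {d r : ℕ} (hw : IsWdr d r w) :
    HasNegPattern (trapezoidPattern d r 0) w := by
  obtain ⟨h_signed, h_low, h_high⟩ := hw
  have h_fix (c : ℤ) (hc : (d : ℤ) + r < c) : w c = c := h_signed.2 c (by push_cast; grind)
  refine ⟨h_signed.mem_signedPerms, fun a c ha hac => ?_, fun c hc => ?_⟩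
  · grind
  · simp only [trapezoidPattern, passPattern, Nat.min_zero]
    grind

lemma HasNegPattern.exists_trapezoidPattern {d r : ℕ}
    (hw : HasNegPattern (trapezoidPattern d r 0) w) (n : ℕ) (hn : n ≤ r + d) :
    ∃ w', HasNegPattern (trapezoidPattern d r n) w' ∧ redCount w = redCount w' := by
  induction n with
  | zero => exact ⟨w, hw, rfl⟩
  | succ n ih =>
    obtain ⟨v, hv, h_eq⟩ := ih (by omega)
    obtain ⟨w', hw', h_eq'⟩ :=
      hv.exists_passPattern (by omega) (abs_nonneg _) (by grind) (min d n) le_rfl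
    refine ⟨w', hw'.congr fun c hc => ?_, h_eq.trans h_eq'⟩
    simp only [trapezoidPattern, passPattern]
    push_cast
    rcases lt_or_ge n d with hnd | hnd
    · rw [min_eq_right (a := (d : ℤ)) (by omega), min_eq_right (a := (d : ℤ)) (by omega),
        abs_of_pos (by omega), abs_of_nonneg (by omega)]
      grind
    · rw [min_eq_left (a := (d : ℤ)) (by omega), min_eq_left (a := (d : ℤ)) (by omega),
        abs_of_nonpos (by omega), abs_of_neg (by omega)]
      grind

end Path

section ShiftedTableaux

variable {d i : ℕ} {lam : ℕ → ℕ} {B : ℤ × ℤ → ℕ} {p : ℤ × ℤ}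

/-- `lam` is a strict partition with at most `d` parts, padded by zeros. Unlike
`IsStrictPartition`, this notion is stable under removing boxes. -/
def IsShiftedShape (d : ℕ) (lam : ℕ → ℕ) : Prop :=
  ∀ i j, 1 ≤ i → i < j → j ≤ d → 0 < lam j → lam j < lam i

/-- The shape obtained from `lam` by removing the last box of row `i`. -/
def removeBox (lam : ℕ → ℕ) (i : ℕ) : ℕ → ℕ := Function.update lam i (lam i - 1)

/-- The last box of row `i`. -/
def endBox (d : ℕ) (lam : ℕ → ℕ) (i : ℕ) : ℤ × ℤ := (i, (lam i : ℤ) + i - d - 1)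

/-- Removing the last box of row `i` of a strict partition leaves a strict partition: no other
row has length `lam i - 1`, unless this is `0`. -/
structure IsRemovable (d : ℕ) (lam : ℕ → ℕ) (i : ℕ) : Prop where
  one_le : 1 ≤ i
  le : i ≤ d
  pos : 0 < lam i
  add_one_ne : ∀ t, 1 ≤ t → t ≤ d → 0 < lam t → lam t + 1 ≠ lam i

lemma IsShiftedShape.eq_of_apply_eq {j : ℕ} (hlam : IsShiftedShape d lam) (hi : 1 ≤ i)
    (hid : i ≤ d) (hj : 1 ≤ j) (hjd : j ≤ d) (h_pos : 0 < lam i) (h : lam i = lam j) : i = j := by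
  have h_lt := hlam i j hi
  have h_gt := hlam j i hj
  omega

lemma IsShiftedShape.apply_add_le (hlam : IsShiftedShape d lam) (hi : 1 ≤ i) (t : ℕ)
    (ht : i + t ≤ d) (h_pos : 0 < lam (i + t)) : lam (i + t) + t ≤ lam i := by
  induction t with
  | zero => exact le_rfl
  | succ t ih =>
    have h_lt := hlam (i + t) (i + (t + 1)) (by omega) (by omega) ht h_pos
    have h_le := ih (by omega) (by omega)
    omega

lemma IsRemovable.isShiftedShape_removeBox (hi : IsRemovable d lam i)
    (hlam : IsShiftedShape d lam) : IsShiftedShape d (removeBox lam i) := by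
  intro a c ha hac hcd
  have h_lt := hlam a c ha hac hcd
  have h_ne := hi.add_one_ne c (by omega) hcd
  simp only [removeBox, Function.update_apply]
  split_ifs <;> grind

lemma mem_diagram_iff : p ∈ Diagram d lam ↔ ∃ i : ℕ, 1 ≤ i ∧ i ≤ d ∧ p.1 = i ∧
    (i : ℤ) - d ≤ p.2 ∧ p.2 + d + 1 ≤ (lam i : ℤ) + i := by
  constructor
  · rintro ⟨h_one, h_le, h_left, h_right⟩
    exact ⟨p.1.toNat, by omega⟩
  · rintro ⟨i, h_one, h_le, h_row, h_left, h_right⟩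
    refine ⟨by omega, by omega, by omega, ?_⟩
    rwa [h_row, Int.toNat_natCast]

lemma endBox_injective : Function.Injective (endBox d lam) := fun _ _ h =>
  Int.natCast_inj.1 (congrArg Prod.fst h)

lemma endBox_notMem_diagram_removeBox (h_pos : 0 < lam i) :
    endBox d lam i ∉ Diagram d (removeBox lam i) := by
  rw [mem_diagram_iff]
  rintro ⟨t, -, -, h_row, -, h_col⟩
  obtain rfl : i = t := Int.natCast_inj.1 h_row
  simp only [endBox, removeBox, Function.update_self] at h_col
  omega

lemma insert_endBox_diagram_removeBox (h_one : 1 ≤ i) (h_le : i ≤ d) (h_pos : 0 < lam i) :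
    insert (endBox d lam i) (Diagram d (removeBox lam i)) = Diagram d lam := by
  ext ⟨a, c⟩
  simp only [Diagram, Set.mem_insert_iff, Set.mem_ofPred_eq, endBox, removeBox, Prod.mk.injEq]
  by_cases h : a.toNat = i
  · rw [h, Function.update_self]
    omega
  · rw [Function.update_of_ne h]
    omega

lemma sizeP_removeBox_add_one (h_one : 1 ≤ i) (h_le : i ≤ d) (h_pos : 0 < lam i) :
    sizeP d (removeBox lam i) + 1 = sizeP d lam := by
  have hi : i ∈ Finset.Icc 1 d := Finset.mem_Icc.2 ⟨h_one, h_le⟩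
  rw [sizeP, sizeP, removeBox, Finset.sum_update_of_mem hi,
    Finset.sum_eq_add_sum_sdiff_singleton_of_mem hi lam]
  omega

/-- `p` is a box of `D(lam)` with no box to its right or below it. -/
def IsCorner (d : ℕ) (lam : ℕ → ℕ) (p : ℤ × ℤ) : Prop :=
  p ∈ Diagram d lam ∧
    ∀ q ∈ Diagram d lam, ¬(p.1 = q.1 ∧ p.2 < q.2) ∧ ¬(p.2 = q.2 ∧ p.1 < q.1)

lemma IsCorner.exists_isRemovable (hp : IsCorner d lam p) (hlam : IsShiftedShape d lam) :
    ∃ i, IsRemovable d lam i ∧ p = endBox d lam i := by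
  obtain ⟨hp_mem, h_max⟩ := hp
  obtain ⟨i, h_one, h_le, h_row, h_left, h_right⟩ := mem_diagram_iff.1 hp_mem
  have h_end : p.2 + d + 1 = (lam i : ℤ) + i := by
    by_contra h_ne
    exact (h_max (p.1, p.2 + 1) <| mem_diagram_iff.2
      ⟨i, h_one, h_le, h_row, by grind, by grind⟩).1 ⟨rfl, by grind⟩
  have h_box : p = endBox d lam i := Prod.ext h_row (by grind [endBox])
  refine ⟨i, ⟨h_one, h_le, by omega, fun t ht htd h_pos h_eq => ?_⟩, h_box⟩
  have hit : i < t := by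
    by_contra! h
    have := hlam t i ht
    grind
  have h_gap := hlam.apply_add_le h_one (t - i) (by omega)
  rw [Nat.add_sub_cancel' hit.le] at h_gap
  exact (h_max (t, p.2) <| mem_diagram_iff.2 ⟨t, ht, htd, rfl, by grind, by grind⟩).2
    ⟨rfl, by grind⟩

lemma IsRemovable.isCorner_endBox (hi : IsRemovable d lam i) (hlam : IsShiftedShape d lam) :
    IsCorner d lam (endBox d lam i) := by
  refine ⟨mem_diagram_iff.2 ⟨i, hi.one_le, hi.le, rfl, ?_, ?_⟩, fun q hq => ⟨?_, ?_⟩⟩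
  · have := hi.pos
    grind [endBox]
  · grind [endBox]
  · obtain ⟨t, -, -, h_row, -, h_right⟩ := mem_diagram_iff.1 hq
    rintro ⟨h_row', h_lt⟩
    obtain rfl : i = t := Int.natCast_inj.1 (h_row'.trans h_row)
    grind [endBox]
  · obtain ⟨t, -, htd, h_row, h_left, h_right⟩ := mem_diagram_iff.1 hq
    rintro ⟨h_col, h_lt⟩
    have hit : i < t := by grind [endBox]
    have h_gap := (hi.isShiftedShape_removeBox hlam).apply_add_le hi.one_le (t - i) (by omega)
    rw [Nat.add_sub_cancel' hit.le, removeBox, Function.update_of_ne hit.ne',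
      Function.update_self] at h_gap
    have h_pos := hi.pos
    grind [endBox]

lemma IsSYT.le_sizeP (hB : IsSYT d lam B) (p : ℤ × ℤ) : B p ≤ sizeP d lam := by
  by_cases hp : p ∈ Diagram d lam
  · exact (hB.1.1.mapsTo hp).2
  · rw [hB.1.2 p hp]
    exact Nat.zero_le _

lemma IsSYT.isCorner (hB : IsSYT d lam B) (hp : p ∈ Diagram d lam) (h : B p = sizeP d lam) :
    IsCorner d lam p :=
  ⟨hp, fun q hq => ⟨fun h_row => absurd ((hB.2 p hp q hq).1 h_row) (h ▸ hB.le_sizeP q).not_gt,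
    fun h_col => absurd ((hB.2 p hp q hq).2 h_col) (h ▸ hB.le_sizeP q).not_gt⟩⟩

lemma IsRemovable.isSYT_update (hi : IsRemovable d lam i) (hlam : IsShiftedShape d lam)
    (hB : IsSYT d (removeBox lam i) B) :
    IsSYT d lam (Function.update B (endBox d lam i) (sizeP d lam)) := by
  have h_size := sizeP_removeBox_add_one hi.one_le hi.le hi.pos
  have h_notMem := endBox_notMem_diagram_removeBox (d := d) hi.pos
  have h_insert := insert_endBox_diagram_removeBox hi.one_le hi.le hi.pos
  have h_ne (p : ℤ × ℤ) (hp : p ∈ Diagram d (removeBox lam i)) : p ≠ endBox d lam i :=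
    ne_of_mem_of_not_mem hp h_notMem
  refine ⟨⟨?_, fun p hp => ?_⟩, fun p hp q hq => ?_⟩
  · have h_bij : Set.BijOn (Function.update B (endBox d lam i) (sizeP d lam))
        (Diagram d (removeBox lam i)) (Set.Icc 1 (sizeP d (removeBox lam i))) :=
      hB.1.1.congr fun p hp => (Function.update_of_ne (h_ne p hp) _ _).symm
    have h_bij' := h_bij.insert (a := endBox d lam i) (by rw [Function.update_self]; grind)
    rw [h_insert, Function.update_self] at h_bij'
    convert h_bij' using 1
    grind
  · rw [← h_insert, Set.mem_insert_iff, not_or] at hp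
    rw [Function.update_of_ne hp.1, hB.1.2 p hp.2]
  · have h_corner := (hi.isCorner_endBox hlam).2 q hq
    rw [← h_insert] at hp hq
    rcases hp with rfl | hp
    · exact ⟨fun h => absurd h h_corner.1, fun h => absurd h h_corner.2⟩
    · rw [Function.update_of_ne (h_ne p hp)]
      rcases hq with rfl | hq
      · rw [Function.update_self]
        have h_le := hB.le_sizeP p
        omega
      · rw [Function.update_of_ne (h_ne q hq)]
        exact hB.2 p hp q hq

lemma IsRemovable.isSYT_removeBox (hi : IsRemovable d lam i) (hB : IsSYT d lam B)
    (h : B (endBox d lam i) = sizeP d lam) :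
    IsSYT d (removeBox lam i) (Function.update B (endBox d lam i) 0) := by
  have h_size := sizeP_removeBox_add_one hi.one_le hi.le hi.pos
  have h_notMem := endBox_notMem_diagram_removeBox (d := d) hi.pos
  have h_insert := insert_endBox_diagram_removeBox hi.one_le hi.le hi.pos
  have h_ne (p : ℤ × ℤ) (hp : p ∈ Diagram d (removeBox lam i)) : p ≠ endBox d lam i :=
    ne_of_mem_of_not_mem hp h_notMem
  have h_mem (p : ℤ × ℤ) (hp : p ∈ Diagram d (removeBox lam i)) : p ∈ Diagram d lam :=
    h_insert ▸ Set.mem_insert_of_mem _ hp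
  refine ⟨⟨?_, fun p hp => ?_⟩, fun p hp q hq => ?_⟩
  · have h_bij := hB.1.1.sdiff_singleton (h_insert ▸ Set.mem_insert _ _ : endBox d lam i ∈ _)
    rw [h, ← h_insert, Set.insert_sdiff_self_of_notMem h_notMem] at h_bij
    have h_Icc : Set.Icc 1 (sizeP d lam) \ {sizeP d lam} =
        Set.Icc 1 (sizeP d (removeBox lam i)) := by grind
    rw [h_Icc] at h_bij
    exact h_bij.congr fun p hp => (Function.update_of_ne (h_ne p hp) _ _).symm
  · rcases eq_or_ne p (endBox d lam i) with rfl | hp_ne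
    · exact Function.update_self ..
    · rw [Function.update_of_ne hp_ne]
      refine hB.1.2 p ?_
      rw [← h_insert, Set.mem_insert_iff, not_or]
      exact ⟨hp_ne, hp⟩
  · rw [Function.update_of_ne (h_ne p hp), Function.update_of_ne (h_ne q hq)]
    exact hB.2 p (h_mem p hp) q (h_mem q hq)

/-- The box containing the largest entry is a corner, and erasing it leaves a tableau. -/
lemma nonempty_sytEquivSigma (hlam : IsShiftedShape d lam) (h_pos : 0 < sizeP d lam) :
    Nonempty ((Σ i : {i // IsRemovable d lam i}, {B // IsSYT d (removeBox lam i) B}) ≃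
      {B // IsSYT d lam B}) := by
  refine ⟨Equiv.ofBijective (fun x => ⟨_, x.1.2.isSYT_update hlam x.2.2⟩) ⟨?_, ?_⟩⟩
  · rintro ⟨⟨i, hi⟩, B, hB⟩ ⟨⟨j, hj⟩, C, hC⟩ h
    replace h := congrArg Subtype.val h
    dsimp only at h
    have h_box : endBox d lam i = endBox d lam j := by
      refine (hi.isSYT_update hlam hB).1.1.injOn (hi.isCorner_endBox hlam).1
        (hj.isCorner_endBox hlam).1 ?_
      rw [Function.update_self, h, Function.update_self]
    obtain rfl := endBox_injective h_box
    have h_zero {C : ℤ × ℤ → ℕ} (hC : IsSYT d (removeBox lam i) C) : C (endBox d lam i) = 0 :=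
      hC.1.2 _ (endBox_notMem_diagram_removeBox hi.pos)
    obtain rfl : B = C := by
      rw [← Function.update_eq_self (endBox d lam i) B, h_zero hB,
        ← Function.update_eq_self (endBox d lam i) C, h_zero hC,
        ← Function.update_idem (sizeP d lam) 0 B, h, Function.update_idem]
    rfl
  · rintro ⟨B, hB⟩
    obtain ⟨p, hp, h_max⟩ := hB.1.1.surjOn (Set.right_mem_Icc.2 h_pos)
    obtain ⟨i, hi, rfl⟩ := (hB.isCorner hp h_max).exists_isRemovable hlam
    refine ⟨⟨⟨i, hi⟩, _, hi.isSYT_removeBox hB h_max⟩, Subtype.ext ?_⟩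
    dsimp only
    rw [Function.update_idem, ← h_max, Function.update_eq_self]

end ShiftedTableaux

section Grassmannian

variable {d i j r : ℕ} {lam : ℕ → ℕ} {w : Equiv.Perm ℤ}

/-- `w` is the Grassmannian signed permutation of the strict partition `lam`: it is increasing
on positive positions, and the absolute values of its negative entries there are the parts
of `lam`. -/
structure IsGrassmannian (d : ℕ) (lam : ℕ → ℕ) (w : Equiv.Perm ℤ) : Prop where
  mem : w ∈ signedPerms
  strictMonoOn : StrictMonoOn w (Set.Ioi 0)
  inv_neg_iff : ∀ x : ℕ, 0 < x → (w⁻¹ x < 0 ↔ ∃ i, 1 ≤ i ∧ i ≤ d ∧ lam i = x)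

lemma IsGrassmannian.isLeftDescent_iff_neg_and_pos (hw : IsGrassmannian d lam w) :
    IsLeftDescent j w ↔ w⁻¹ (j + 1) < 0 ∧ 0 < w⁻¹ (nzPred j) := by
  have h_odd := odd_of_mem_signedPerms (inv_mem hw.mem)
  have h_ne := apply_ne_zero (inv_mem hw.mem) (nzPred_ne_zero j)
  have h_ne' := apply_ne_zero (inv_mem hw.mem) (show (j + 1 : ℤ) ≠ 0 by omega)
  have h_lt {x y : ℤ} (hx : 0 < w⁻¹ x) (hxy : w⁻¹ x < w⁻¹ y) : x < y := by
    simpa using hw.strictMonoOn hx (hx.trans hxy) hxy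
  have h_pred := nzPred_lt j
  rw [isLeftDescent_iff hw.mem]
  refine ⟨fun h => ?_, fun h => h.1.trans h.2⟩
  by_contra h_not
  rcases lt_or_ge 0 (w⁻¹ (j + 1)) with h_pos | h_neg
  · exact (h_lt h_pos h).asymm h_pred
  · have h_lt' := h_lt (x := -nzPred j) (y := -(j + 1)) (by rw [h_odd]; omega)
      (by rw [h_odd, h_odd]; omega)
    omega

lemma IsGrassmannian.isLeftDescent_iff_exists (hw : IsGrassmannian d lam w) :
    IsLeftDescent j w ↔ ∃ i, IsRemovable d lam i ∧ lam i = j + 1 := by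
  have h_odd := odd_of_mem_signedPerms (inv_mem hw.mem)
  have h_ne := apply_ne_zero (inv_mem hw.mem) (nzPred_ne_zero j)
  have h_succ := hw.inv_neg_iff (j + 1) j.succ_pos
  rw [Nat.cast_add_one] at h_succ
  rw [hw.isLeftDescent_iff_neg_and_pos, h_succ]
  rcases j.eq_zero_or_pos with rfl | hj
  · have h_pred : nzPred 0 = -(((0 : ℕ) : ℤ) + 1) := by simp [nzPred]
    rw [h_pred, h_odd, neg_pos, h_succ, and_self]
    exact ⟨fun ⟨i, h_one, h_le, h⟩ => ⟨i, ⟨h_one, h_le, by omega, by omega⟩, h⟩,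
      fun ⟨i, hi, h⟩ => ⟨i, hi.one_le, hi.le, h⟩⟩
  · have h_pred : nzPred j = j := if_neg hj.ne'
    rw [h_pred] at h_ne ⊢
    have h_pos : 0 < w⁻¹ j ↔ ¬∃ t, 1 ≤ t ∧ t ≤ d ∧ lam t = j := by
      rw [← hw.inv_neg_iff j hj]
      omega
    rw [h_pos]
    constructor
    · rintro ⟨⟨i, h_one, h_le, h⟩, h_not⟩
      exact ⟨i, ⟨h_one, h_le, by omega, fun t ht htd _ h' => h_not ⟨t, ht, htd, by omega⟩⟩, h⟩
    · rintro ⟨i, hi, h⟩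
      refine ⟨⟨i, hi.one_le, hi.le, h⟩, fun ⟨t, ht, htd, h'⟩ => ?_⟩
      exact hi.add_one_ne t ht htd (by omega) (by omega)

lemma IsGrassmannian.strictMonoOn_sB_mul (hw : IsGrassmannian d lam w) (hj : IsLeftDescent j w) :
    StrictMonoOn (sB j * w) (Set.Ioi 0) := by
  obtain ⟨h_neg, h_pos⟩ := hw.isLeftDescent_iff_neg_and_pos.1 hj
  intro a ha c hc hac
  rw [Set.mem_Ioi] at ha hc
  have hwa := apply_ne_zero hw.mem ha.ne'
  have hwc := apply_ne_zero hw.mem hc.ne'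
  rw [Equiv.Perm.mul_apply, Equiv.Perm.mul_apply]
  by_contra! h
  have h_lt := h.lt_of_ne ((sB j).injective.ne (w.injective.ne hac.ne'))
  rcases eq_or_eq_of_sB_lt hwa hwc (hw.strictMonoOn ha hc hac) h_lt with ⟨-, h_eq⟩ | ⟨-, h_eq⟩
  · have h_inv : w⁻¹ (j + 1) = c := Equiv.Perm.inv_eq_iff_eq.2 h_eq.symm
    omega
  · have h_inv : w⁻¹ (nzPred j) = -c := by
      rw [Equiv.Perm.inv_eq_iff_eq, odd_of_mem_signedPerms hw.mem, h_eq, neg_neg]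
    omega

lemma IsGrassmannian.sB_mul (hw : IsGrassmannian d lam w) (hlam : IsShiftedShape d lam)
    (hi : IsRemovable d lam i) (h : lam i = j + 1) :
    IsGrassmannian d (removeBox lam i) (sB j * w) := by
  have hj : IsLeftDescent j w := hw.isLeftDescent_iff_exists.2 ⟨i, hi, h⟩
  obtain ⟨h_neg, h_pos⟩ := hw.isLeftDescent_iff_neg_and_pos.1 hj
  refine ⟨sB_mul_mem j hw.mem, hw.strictMonoOn_sB_mul hj, fun x hx => ?_⟩
  rw [mul_inv_rev, sB_inv, Equiv.Perm.mul_apply]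
  by_cases h_succ : x = j + 1
  · rw [h_succ, Nat.cast_add_one, sB_apply_succ]
    refine iff_of_false h_pos.asymm ?_
    rintro ⟨t, ht, htd, h_eq⟩
    have h_row := hlam.eq_of_apply_eq (j := t) hi.one_le hi.le ht htd hi.pos
    rw [removeBox, Function.update_apply] at h_eq
    grind
  by_cases h_pred : x = j
  · rw [h_pred, show (j : ℤ) = nzPred j by grind [nzPred], sB_apply_nzPred]
    exact iff_of_true h_neg ⟨i, hi.one_le, hi.le, by simp [removeBox, h]⟩
  · have h_fix : sB j x = x := by grind [sB_apply, nzPred]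
    rw [h_fix, hw.inv_neg_iff x hx]
    have h_iff (t : ℕ) : lam t = x ↔ removeBox lam i t = x := by
      rw [removeBox, Function.update_apply]
      grind
    simp only [h_iff]

lemma IsGrassmannian.eq_one (hw : IsGrassmannian d lam w) (h : sizeP d lam = 0) : w = 1 := by
  by_contra h_ne
  obtain ⟨j, hj⟩ := exists_isLeftDescent hw.mem h_ne
  obtain ⟨i, hi, -⟩ := hw.isLeftDescent_iff_exists.1 hj
  have h_zero := Finset.sum_eq_zero_iff.1 h i (Finset.mem_Icc.2 ⟨hi.one_le, hi.le⟩)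
  exact hi.pos.ne' h_zero

lemma IsGrassmannian.ne_one (hw : IsGrassmannian d lam w) (h : sizeP d lam ≠ 0) : w ≠ 1 := by
  rintro rfl
  obtain ⟨i, hi, h_ne⟩ := Finset.exists_ne_zero_of_sum_ne_zero h
  rw [Finset.mem_Icc] at hi
  have h_neg := (hw.inv_neg_iff (lam i) (by omega)).2 ⟨i, hi.1, hi.2, rfl⟩
  rw [inv_one, Equiv.Perm.one_apply] at h_neg
  omega

lemma isSYT_iff_eq_zero {B : ℤ × ℤ → ℕ} (h : sizeP d lam = 0) : IsSYT d lam B ↔ B = 0 := by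
  have h_empty : Diagram d lam = ∅ := by
    refine Set.eq_empty_iff_forall_notMem.2 fun p hp => ?_
    obtain ⟨i, h_one, h_le, -, h_left, h_right⟩ := mem_diagram_iff.1 hp
    have h_zero := Finset.sum_eq_zero_iff.1 h i (Finset.mem_Icc.2 ⟨h_one, h_le⟩)
    omega
  simp [IsSYT, IsFilling, h_empty, h, funext_iff]

/-- Left descents of a Grassmannian signed permutation are removable rows of its shape. -/
noncomputable def IsGrassmannian.removableEquiv (hw : IsGrassmannian d lam w)
    (hlam : IsShiftedShape d lam) : {i // IsRemovable d lam i} ≃ {j // IsLeftDescent j w} :=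
  Equiv.ofBijective (fun i => ⟨lam i - 1, hw.isLeftDescent_iff_exists.2
    ⟨i, i.2, (Nat.sub_add_cancel i.2.pos).symm⟩⟩) <| by
    constructor
    · rintro ⟨i, hi⟩ ⟨t, ht⟩ h
      have h_eq : lam i - 1 = lam t - 1 := congrArg Subtype.val h
      have h_pos_i : 0 < lam i := hi.pos
      have h_pos_t : 0 < lam t := ht.pos
      have h_lam : lam i = lam t := by omega
      exact Subtype.ext <| hlam.eq_of_apply_eq hi.one_le hi.le ht.one_le ht.le hi.pos h_lam
    · rintro ⟨j, hj⟩
      obtain ⟨i, hi, h⟩ := hw.isLeftDescent_iff_exists.1 hj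
      exact ⟨⟨i, hi⟩, Subtype.ext (by simp [h])⟩

lemma IsGrassmannian.nonempty_equiv (hw : IsGrassmannian d lam w) (hlam : IsShiftedShape d lam) :
    Nonempty ({B // IsSYT d lam B} ≃ {L // IsMinWord w L}) := by
  induction h_size : sizeP d lam generalizing lam w with
  | zero =>
    obtain rfl := hw.eq_one h_size
    simp only [isSYT_iff_eq_zero h_size, isMinWord_one_iff]
    exact ⟨Equiv.ofUnique _ _⟩
  | succ n ih =>
    obtain ⟨e⟩ := nonempty_sytEquivSigma hlam (by omega)
    have ih' (i : {i // IsRemovable d lam i}) : Nonempty ({B // IsSYT d (removeBox lam i) B} ≃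
        {L // IsMinWord (sB (hw.removableEquiv hlam i) * w) L}) := by
      have h_rem := sizeP_removeBox_add_one i.2.one_le i.2.le i.2.pos
      exact ih (hw.sB_mul hlam i.2 (Nat.sub_add_cancel i.2.pos).symm)
        (i.2.isShiftedShape_removeBox hlam) (by omega)
    exact ⟨e.symm.trans <| (Equiv.sigmaCongr (hw.removableEquiv hlam) fun i => (ih' i).some).trans
      (minWordEquivSigma hw.mem (hw.ne_one (by omega))).symm⟩

lemma IsGrassmannian.redCount_eq (hw : IsGrassmannian d lam w) (hlam : IsShiftedShape d lam) :
    redCount w = Nat.card {B // IsSYT d lam B} :=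
  (Nat.card_congr (hw.nonempty_equiv hlam).some).symm

lemma isShiftedShape_zlam (d r : ℕ) : IsShiftedShape d (Zlam d r) := by
  intro i j _ hij _ h_pos
  grind [Zlam]

lemma HasNegPattern.isGrassmannian_zlam (hw : HasNegPattern (trapezoidPattern d r (r + d)) w) :
    IsGrassmannian d (Zlam d r) w := by
  have h_min (c : ℤ) (hc : 0 < c) :
      min (w c) 0 = if c ≤ d then -(r + 2 * (d - c) + 1 : ℤ) else 0 := by
    rw [hw.min_apply c hc]
    simp only [trapezoidPattern, passPattern]
    grind
  refine ⟨hw.mem, fun a ha c hc hac => ?_, fun x hx => ?_⟩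
  · have h_lt := hw.lt_of_pos a c ha hac
    have h_min_a := h_min a ha
    have h_min_c := h_min c hc
    have h_ne_a := apply_ne_zero hw.mem ha.ne'
    have h_ne_c := apply_ne_zero hw.mem hc.ne'
    split_ifs at h_min_a h_min_c <;> omega
  · have h_odd := odd_of_mem_signedPerms hw.mem
    constructor
    · intro h_neg
      have h_min_x := h_min (-w⁻¹ x) (by omega)
      have h_apply : w (w⁻¹ x) = x := w.apply_symm_apply x
      rw [h_odd, h_apply] at h_min_x
      refine ⟨(-w⁻¹ x).toNat, ?_, ?_, ?_⟩ <;> grind [Zlam]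
    · rintro ⟨i, h_one, h_le, rfl⟩
      have h_min_i := h_min i (by omega)
      have h_inv : w⁻¹ (Zlam d r i) = -i := by
        rw [Equiv.Perm.inv_eq_iff_eq, h_odd]
        grind [Zlam]
      omega

end Grassmannian

/-- `|Red(w^{(d,r)})| = |SYT(Z(d,r))|`. -/
theorem red_card_eq_syt_card (d r : ℕ) (hd : 1 ≤ d)
    (w : Equiv.Perm ℤ) (hw : IsWdr d r w) :
    Nat.card {L : List ℕ // IsReducedWord (d + r) w L} =
      Nat.card {B : ℤ × ℤ → ℕ // IsSYT d (Zlam d r) B} := by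
  obtain ⟨w', hw', h_eq⟩ := hw.hasNegPattern.exists_trapezoidPattern (r + d) le_rfl
  simp only [hw.1.isReducedWord_iff]
  calc redCount w = redCount w' := h_eq
    _ = _ := hw'.isGrassmannian_zlam.redCount_eq (isShiftedShape_zlam d r)

end BST
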